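/- arXiv:1903.12567 — 10 statements merged into one kernel-verified Lean document; each statement's English description precedes it below -/
import Mathlib

section
/- Let G be a group and let x, y, z be elements of G satisfying x*y = y*x, x*z*x = z*x*z, and y*z*y = z*y*z. Then (x*x*y*z)^3 = (x*y*z)^4. -/
/-- Equation (4) of the paper: in any group, if `x*y = y*x`, `x*z*x = z*x*z` and
`y*z*y = z*y*z`, then `(x*x*y*z)^3 = (x*y*z)^4`. -/
theorem stmt_0 (G : Type*) [Group G] (x y z : G)
    (hxy : x * y = y * x) (hxz : x * z * x = z * x * z) (hyz : y * z * y = z * y * z) :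
    (x * x * y * z) ^ 3 = (x * y * z) ^ 4 := by
  have h1 : x*y*z*(x*y*z)*x = y*(x*y*z*(x*y*z)) := by
    calc x*y*z*(x*y*z)*x = x*y*z*(x*y)*z*x := by simp only [mul_assoc]
      _ = x*y*z*y*(x*z*x) := by rw [hxy]; simp only [mul_assoc]
      _ = x*y*(z*y*z)*x*z := by rw [hxz]; simp only [mul_assoc]
      _ = (x*y)*y*z*(y*x)*z := by rw [← hyz]; simp only [mul_assoc]
      _ = y*x*y*z*(x*y)*z := by rw [← hxy, hxy]
      _ = _ := by simp only [mul_assoc]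
  have h2 : x*y*z*(x*y*z)*z = x*z*y*x*(x*z*x) := by
    calc x*y*z*(x*y*z)*z = x*y*z*(x*y)*z*z := by simp only [mul_assoc]
      _ = x*y*z*(y*x)*z*z := by rw [hxy]
      _ = x*(y*z*y)*x*z*z := by simp only [mul_assoc]
      _ = x*z*y*(z*x*z)*z := by rw [hyz]; simp only [mul_assoc]
      _ = x*z*y*x*(z*(x*z)) := by rw [← hxz]; simp only [mul_assoc]
      _ = _ := by rw [hxz]; simp only [mul_assoc]
  have h3 : z*(x*y*z*(x*y*z)) = x*z*y*x*(x*z*x) := by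
    calc z*(x*y*z*(x*y*z)) = z*x*y*z*(x*y)*z := by simp only [mul_assoc]
      _ = z*x*(y*z*y)*x*z := by rw [hxy]; simp only [mul_assoc]
      _ = (z*x*z)*y*z*x*z := by rw [hyz]; simp only [mul_assoc]
      _ = x*z*(x*y)*(z*(x*z)) := by rw [← hxz]; simp only [mul_assoc]
      _ = _ := by rw [hxy, hxz]; simp only [mul_assoc]
  have h4 : x*y*z*x*(x*y)*z*x = y*z*(x*y*z*(x*y*z)) := by
    calc x*y*z*x*(x*y)*z*x = x*y*z*x*y*(x*z*x) := by rw [hxy]; simp only [mul_assoc]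
      _ = (x*y*z*(x*y*z)*x)*z := by rw [hxz]; simp only [mul_assoc]
      _ = y*(x*y*z*(x*y*z)*z) := by rw [h1]; simp only [mul_assoc]
      _ = y*(z*(x*y*z*(x*y*z))) := by rw [h2, h3]
      _ = _ := by simp only [mul_assoc]
  calc (x*x*y*z)^3 = x*(x*y*z*x*(x*y)*z*x)*(x*y*z) := by
        simp only [pow_succ, pow_zero, one_mul, mul_assoc]
    _ = _ := by rw [h4]; simp only [pow_succ, pow_zero, one_mul, mul_assoc]
end

section
/- Let G be a group and let x, y, z be elements of G satisfying x*y = y*x, x*z*x = z*x*z, and y*z*y = z*y*z. Then (x*y*z)^4 = (x*z*y)^4. -/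
/-- The square of the Coxeter element `x*y*z` carries `y` to `x`. -/
theorem sq_swap {G : Type*} [Group G] (x y z : G)
    (hxy : x * y = y * x) (hxz : x * z * x = z * x * z) (hyz : y * z * y = z * y * z) :
    (x * y * z) ^ 2 * y = x * (x * y * z) ^ 2 := by
  calc (x * y * z) ^ 2 * y = x * y * z * x * (y * z * y) := by simp only [pow_two, mul_assoc]
    _ = x * y * (z * x * z) * y * z := by rw [hyz]; simp only [mul_assoc]
    _ = x * (y * x) * z * x * y * z := by rw [← hxz]; simp only [mul_assoc]
    _ = x * (x * y * z) ^ 2 := by rw [← hxy]; simp only [pow_two, mul_assoc]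

/-- Equation (5) of the paper: in any group, if `x*y = y*x`, `x*z*x = z*x*z` and
`y*z*y = z*y*z`, then `(x*y*z)^4 = (x*z*y)^4`. -/
theorem stmt_1 (G : Type*) [Group G] (x y z : G)
    (hxy : x * y = y * x) (hxz : x * z * x = z * x * z) (hyz : y * z * y = z * y * z) :
    (x * y * z) ^ 4 = (x * z * y) ^ 4 := by
  have h1 := sq_swap x y z hxy hxz hyz
  have h2 := sq_swap y x z hxy.symm hyz hxz
  rw [← hxy] at h2
  have h3 : (x * y * z) ^ 4 * y = y * (x * y * z) ^ 4 := by
    rw [show 4 = 2 + 2 from rfl, pow_add, mul_assoc, h1, ← mul_assoc, h2, mul_assoc]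
  have h4 : SemiconjBy y (x * z * y) (x * y * z) := by
    unfold SemiconjBy
    rw [hxy]; simp only [mul_assoc]
  have h5 := (h4.pow_right 4).eq
  rw [h3] at h5
  exact (mul_left_cancel h5).symm
end

section
/- In B4, the element (σ1*σ2*σ3)^4 lies in the center of B4. -/
/-- Braid relations of the braid group `B₄` on generators `σ1 = of 0`, `σ2 = of 1`,
`σ3 = of 2`. -/
def B4rels : Set (FreeGroup (Fin 3)) :=
  {FreeGroup.of 0 * FreeGroup.of 1 * FreeGroup.of 0 *
      (FreeGroup.of 1 * FreeGroup.of 0 * FreeGroup.of 1)⁻¹,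
   FreeGroup.of 1 * FreeGroup.of 2 * FreeGroup.of 1 *
      (FreeGroup.of 2 * FreeGroup.of 1 * FreeGroup.of 2)⁻¹,
   FreeGroup.of 0 * FreeGroup.of 2 * (FreeGroup.of 2 * FreeGroup.of 0)⁻¹}

/-- The braid group on 4 strands, as a presented group. -/
abbrev B4 : Type := PresentedGroup B4rels

/-- The fourth power of `a b c` commutes with each generator, given the braid relations. -/
theorem braid_aux {G : Type*} [Group G] (a b c : G) (h1 : a * b * a = b * a * b)
    (h2 : b * c * b = c * b * c) (h3 : a * c = c * a) :
    Commute ((a * b * c) ^ 4) a ∧ Commute ((a * b * c) ^ 4) b ∧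
      Commute ((a * b * c) ^ 4) c := by
  have e1 : (a * b * c) * a = b * (a * b * c) := by
    calc (a * b * c) * a = a * b * (c * a) := by group
      _ = (a * b * a) * c := by rw [← h3]; group
      _ = b * (a * b * c) := by rw [h1]; group
  have e2 : (a * b * c) * b = c * (a * b * c) := by
    calc (a * b * c) * b = a * (b * c * b) := by group
      _ = (a * c) * (b * c) := by rw [h2]; group
      _ = c * (a * b * c) := by rw [h3]; group
  have e3 : (a * b * c) ^ 2 * c = a * (a * b * c) ^ 2 := by
    have : (a * b * c) * (a * b * c) = b * c * (a * b * c) * c := by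
      calc (a * b * c) * (a * b * c) = ((a * b * c) * a) * b * c := by group
        _ = b * ((a * b * c) * b) * c := by rw [e1]; group
        _ = b * c * (a * b * c) * c := by rw [e2]; group
    rw [pow_two]
    nth_rewrite 2 [this]
    group
  generalize a * b * c = d at e1 e2 e3
  have hd : Commute (d ^ 4) d := (Commute.refl d).pow_left 4
  have ka : Commute (d ^ 4) a := by
    change d ^ 4 * a = a * d ^ 4
    calc d ^ 4 * a = d ^ 3 * (d * a) := by group
      _ = d ^ 2 * (d * b) * d := by rw [e1]; group
      _ = (d ^ 2 * c) * d ^ 2 := by rw [e2, pow_two]; simp only [mul_assoc]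
      _ = a * d ^ 4 := by rw [e3]; group
  have hb : b = d * a * d⁻¹ := by rw [e1]; group
  have kb : Commute (d ^ 4) b := by
    rw [hb]; exact (hd.mul_right ka).mul_right hd.inv_right
  have hc : c = d * b * d⁻¹ := by rw [e2]; group
  refine ⟨ka, kb, ?_⟩
  rw [hc]; exact (hd.mul_right kb).mul_right hd.inv_right

/-- The element `(σ1 σ2 σ3)^4` is central in the braid group `B₄`. -/
theorem stmt_3 :
    ((PresentedGroup.of 0 * PresentedGroup.of 1 * PresentedGroup.of 2 : B4) ^ 4) ∈
      Subgroup.center B4 := by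
  have key := braid_aux (PresentedGroup.of 0 : B4) (PresentedGroup.of 1) (PresentedGroup.of 2)
    (mul_inv_eq_one.mp (PresentedGroup.one_of_mem (rels := B4rels) (Or.inl rfl)))
    (mul_inv_eq_one.mp (PresentedGroup.one_of_mem (rels := B4rels) (Or.inr (Or.inl rfl))))
    (mul_inv_eq_one.mp (PresentedGroup.one_of_mem (rels := B4rels) (Or.inr (Or.inr rfl))))
  rw [Subgroup.mem_center_iff]
  intro g
  have hg : g ∈ Subgroup.centralizer
      {((PresentedGroup.of 0 * PresentedGroup.of 1 * PresentedGroup.of 2 : B4) ^ 4)} := by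
    have htop : g ∈ Subgroup.closure (Set.range (PresentedGroup.of (rels := B4rels))) := by
      rw [PresentedGroup.closure_range_of]; trivial
    refine (Subgroup.closure_le _).mpr ?_ htop
    rintro _ ⟨i, rfl⟩
    rw [SetLike.mem_coe, Subgroup.mem_centralizer_singleton_iff]
    fin_cases i
    · exact key.1.symm
    · exact key.2.1.symm
    · exact key.2.2.symm
  exact Subgroup.mem_centralizer_singleton_iff.mp hg
end

section
/- In A(D4), the element (a1*a2*a3*b)^3 lies in the center of A(D4). -/
/-- Relations of the Artin group of type `D₄` on generators `a1 = of 0`, `a2 = of 1`,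
`a3 = of 2`, `b = of 3`: the `aᵢ` pairwise commute and each `aᵢ` braids with `b`. -/
def AD4rels : Set (FreeGroup (Fin 4)) :=
  {FreeGroup.of 0 * FreeGroup.of 1 * (FreeGroup.of 1 * FreeGroup.of 0)⁻¹,
   FreeGroup.of 0 * FreeGroup.of 2 * (FreeGroup.of 2 * FreeGroup.of 0)⁻¹,
   FreeGroup.of 1 * FreeGroup.of 2 * (FreeGroup.of 2 * FreeGroup.of 1)⁻¹,
   FreeGroup.of 0 * FreeGroup.of 3 * FreeGroup.of 0 *
      (FreeGroup.of 3 * FreeGroup.of 0 * FreeGroup.of 3)⁻¹,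
   FreeGroup.of 1 * FreeGroup.of 3 * FreeGroup.of 1 *
      (FreeGroup.of 3 * FreeGroup.of 1 * FreeGroup.of 3)⁻¹,
   FreeGroup.of 2 * FreeGroup.of 3 * FreeGroup.of 2 *
      (FreeGroup.of 3 * FreeGroup.of 2 * FreeGroup.of 3)⁻¹}

/-- The Artin group of type `D₄`, as a presented group. -/
abbrev AD4 : Type := PresentedGroup AD4rels

theorem AD4_aux {G : Type*} [Group G] (x y z b : G)
    (h0 : x * y = y * x) (h1 : x * z = z * x) (h2 : y * z = z * y)
    (h3 : x * b * x = b * x * b) (h4 : y * b * y = b * y * b) (h5 : z * b * z = b * z * b) :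
    x * (x * y * z * b) ^ 3 = (x * y * z * b) ^ 3 * x := by
  have e : ∀ p q u v : G, u = v → p * u * q = p * v * q := by
    intro p q u v h; rw [h]
  have hc : x * x * y * z * b * x * y * z * b * x * y * z * b = x * y * z * b * x * y * z * b * x * y * z * b * x := by
    calc x * x * y * z * b * x * y * z * b * x * y * z * b
      _ = x * y * x * z * b * x * y * z * b * x * y * z * b := by
        simpa only [mul_assoc, one_mul, mul_one] using e (x) (z * b * x * y * z * b * x * y * z * b) _ _ h0
      _ = x * y * x * z * b * x * y * z * b * y * x * z * b := by
        simpa only [mul_assoc, one_mul, mul_one] using e (x * y * x * z * b * x * y * z * b) (z * b) _ _ h0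
      _ = x * y * z * x * b * x * y * z * b * y * x * z * b := by
        simpa only [mul_assoc, one_mul, mul_one] using e (x * y) (b * x * y * z * b * y * x * z * b) _ _ h1
      _ = x * y * z * x * b * x * y * z * b * y * z * x * b := by
        simpa only [mul_assoc, one_mul, mul_one] using e (x * y * z * x * b * x * y * z * b * y) (b) _ _ h1
      _ = x * y * z * x * b * x * z * y * b * y * z * x * b := by
        simpa only [mul_assoc, one_mul, mul_one] using e (x * y * z * x * b * x) (b * y * z * x * b) _ _ h2
      _ = x * y * z * b * x * b * z * y * b * y * z * x * b := by
        simpa only [mul_assoc, one_mul, mul_one] using e (x * y * z) (z * y * b * y * z * x * b) _ _ h3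
      _ = x * y * z * b * x * b * z * b * y * b * z * x * b := by
        simpa only [mul_assoc, one_mul, mul_one] using e (x * y * z * b * x * b * z) (z * x * b) _ _ h4
      _ = x * y * z * b * x * z * b * z * y * b * z * x * b := by
        simpa only [mul_assoc, one_mul, mul_one] using e (x * y * z * b * x) (y * b * z * x * b) _ _ h5.symm
      _ = x * y * z * b * x * z * b * y * z * b * z * x * b := by
        simpa only [mul_assoc, one_mul, mul_one] using e (x * y * z * b * x * z * b) (b * z * x * b) _ _ h2.symm
      _ = x * y * z * b * x * z * b * y * b * z * b * x * b := by
        simpa only [mul_assoc, one_mul, mul_one] using e (x * y * z * b * x * z * b * y) (x * b) _ _ h5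
      _ = x * y * z * b * x * z * b * y * b * z * x * b * x := by
        simpa only [mul_assoc, one_mul, mul_one] using e (x * y * z * b * x * z * b * y * b * z) (1) _ _ h3.symm
      _ = x * y * z * b * x * z * b * y * b * x * z * b * x := by
        simpa only [mul_assoc, one_mul, mul_one] using e (x * y * z * b * x * z * b * y * b) (b * x) _ _ h1.symm
      _ = x * y * z * b * x * z * y * b * y * x * z * b * x := by
        simpa only [mul_assoc, one_mul, mul_one] using e (x * y * z * b * x * z) (x * z * b * x) _ _ h4.symm
      _ = x * y * z * b * x * z * y * b * x * y * z * b * x := by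
        simpa only [mul_assoc, one_mul, mul_one] using e (x * y * z * b * x * z * y * b) (z * b * x) _ _ h0.symm
      _ = x * y * z * b * x * y * z * b * x * y * z * b * x := by
        simpa only [mul_assoc, one_mul, mul_one] using e (x * y * z * b * x) (b * x * y * z * b * x) _ _ h2.symm
  simpa only [pow_succ, pow_zero, mul_assoc, one_mul, mul_one] using hc

theorem AD4_rel {u v : FreeGroup (Fin 4)} (h : u * v⁻¹ ∈ AD4rels) :
    PresentedGroup.mk AD4rels u = PresentedGroup.mk AD4rels v := by
  have := PresentedGroup.one_of_mem h
  rw [map_mul, map_inv, mul_inv_eq_one] at this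
  exact this

/-- The element `(a1 a2 a3 b)^3` is central in the Artin group of type `D₄`. -/
theorem stmt_4 :
    ((PresentedGroup.of 0 * PresentedGroup.of 1 * PresentedGroup.of 2 *
        PresentedGroup.of 3 : AD4) ^ 3) ∈ Subgroup.center AD4 := by
  have h0 : (PresentedGroup.of 0 * PresentedGroup.of 1 : AD4) = PresentedGroup.of 1 * PresentedGroup.of 0 :=
    by
    have h := AD4_rel (u := FreeGroup.of 0 * FreeGroup.of 1) (v := FreeGroup.of 1 * FreeGroup.of 0) (by simp [AD4rels])
    simp only [map_mul] at h
    exact h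
  have h1 : (PresentedGroup.of 0 * PresentedGroup.of 2 : AD4) = PresentedGroup.of 2 * PresentedGroup.of 0 :=
    by
    have h := AD4_rel (u := FreeGroup.of 0 * FreeGroup.of 2) (v := FreeGroup.of 2 * FreeGroup.of 0) (by simp [AD4rels])
    simp only [map_mul] at h
    exact h
  have h2 : (PresentedGroup.of 1 * PresentedGroup.of 2 : AD4) = PresentedGroup.of 2 * PresentedGroup.of 1 :=
    by
    have h := AD4_rel (u := FreeGroup.of 1 * FreeGroup.of 2) (v := FreeGroup.of 2 * FreeGroup.of 1) (by simp [AD4rels])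
    simp only [map_mul] at h
    exact h
  have h3 : (PresentedGroup.of 0 * PresentedGroup.of 3 * PresentedGroup.of 0 : AD4)
      = PresentedGroup.of 3 * PresentedGroup.of 0 * PresentedGroup.of 3 :=
    by
    have h := AD4_rel (u := FreeGroup.of 0 * FreeGroup.of 3 * FreeGroup.of 0) (v := FreeGroup.of 3 * FreeGroup.of 0 * FreeGroup.of 3) (by simp [AD4rels])
    simp only [map_mul] at h
    exact h
  have h4 : (PresentedGroup.of 1 * PresentedGroup.of 3 * PresentedGroup.of 1 : AD4)
      = PresentedGroup.of 3 * PresentedGroup.of 1 * PresentedGroup.of 3 :=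
    by
    have h := AD4_rel (u := FreeGroup.of 1 * FreeGroup.of 3 * FreeGroup.of 1) (v := FreeGroup.of 3 * FreeGroup.of 1 * FreeGroup.of 3) (by simp [AD4rels])
    simp only [map_mul] at h
    exact h
  have h5 : (PresentedGroup.of 2 * PresentedGroup.of 3 * PresentedGroup.of 2 : AD4)
      = PresentedGroup.of 3 * PresentedGroup.of 2 * PresentedGroup.of 3 :=
    by
    have h := AD4_rel (u := FreeGroup.of 2 * FreeGroup.of 3 * FreeGroup.of 2) (v := FreeGroup.of 3 * FreeGroup.of 2 * FreeGroup.of 3) (by simp [AD4rels])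
    simp only [map_mul] at h
    exact h
  generalize hx : (PresentedGroup.of 0 : AD4) = x at *
  generalize hy : (PresentedGroup.of 1 : AD4) = y at *
  generalize hz : (PresentedGroup.of 2 : AD4) = z at *
  generalize hb : (PresentedGroup.of 3 : AD4) = b at *
  have kx : Commute x ((x * y * z * b) ^ 3) := AD4_aux x y z b h0 h1 h2 h3 h4 h5
  have ky : Commute y ((x * y * z * b) ^ 3) := by
    have := AD4_aux y x z b h0.symm h2 h1 h4 h3 h5
    rw [← h0] at this
    exact this
  have kz : Commute z ((x * y * z * b) ^ 3) := by
    have := AD4_aux z x y b h1.symm h2.symm h0 h5 h3 h4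
    rw [← h1, mul_assoc x z y, ← h2, ← mul_assoc x y z] at this
    exact this
  have kb : Commute b ((x * y * z * b) ^ 3) := by
    have h : Commute (x * y * z * b) ((x * y * z * b) ^ 3) := Commute.self_pow _ _
    have h' := ((kx.mul_left ky).mul_left kz).inv_left.mul_left h
    rwa [inv_mul_cancel_left] at h'
  rw [Subgroup.mem_center_iff]
  intro g
  have hg : g ∈ Subgroup.closure (Set.range (PresentedGroup.of : Fin 4 → AD4)) := by
    rw [PresentedGroup.closure_range_of]; trivial
  change Commute g _
  induction hg using Subgroup.closure_induction with
  | mem g hg =>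
    obtain ⟨i, rfl⟩ := hg
    fin_cases i
    · exact hx ▸ kx
    · exact hy ▸ ky
    · exact hz ▸ kz
    · exact hb ▸ kb
  | one => exact Commute.one_left _
  | mul g h _ _ hg hh => exact hg.mul_left hh
  | inv g _ hg => exact hg.inv_left
end

section
/- The group G₁₃₀ is isomorphic to the direct product A(D4) × ℤ², where ℤ² is the free abelian group of rank 2. -/
namespace G130aux
/-- Generators of the Gervais presentation of `PMod(1,3,0)`:
`b = of 0`, `a1 = of 1`, `a2 = of 2`, `a3 = of 3`,
`c12 = of 4`, `c21 = of 5`, `c13 = of 6`, `c31 = of 7`, `c23 = of 8`, `c32 = of 9`. -/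
def g (i : Fin 10) : FreeGroup (Fin 10) := FreeGroup.of i
/-- The relator expressing that `x` and `y` commute. -/
def comm (x y : FreeGroup (Fin 10)) : FreeGroup (Fin 10) := x * y * (y * x)⁻¹
/-- The relator expressing the braid relation `x y x = y x y`. -/
def braid (x y : FreeGroup (Fin 10)) : FreeGroup (Fin 10) := x * y * x * (y * x * y)⁻¹
end G130aux

open G130aux in
/-- The relations of the Gervais presentation of `PMod(1,3,0)`. -/
def G130rels : Set (FreeGroup (Fin 10)) :=
  {comm (g 1) (g 2), comm (g 1) (g 3), comm (g 2) (g 3),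
   comm (g 1) (g 4), comm (g 1) (g 5), comm (g 1) (g 6), comm (g 1) (g 7), comm (g 1) (g 8),
   comm (g 2) (g 4), comm (g 2) (g 5), comm (g 2) (g 7), comm (g 2) (g 8), comm (g 2) (g 9),
   comm (g 3) (g 4), comm (g 3) (g 6), comm (g 3) (g 7), comm (g 3) (g 8), comm (g 3) (g 9),
   comm (g 0) (g 4), comm (g 0) (g 5), comm (g 0) (g 6), comm (g 0) (g 7), comm (g 0) (g 8),
   comm (g 0) (g 9),
   comm (g 4) (g 5), comm (g 4) (g 6), comm (g 4) (g 7), comm (g 4) (g 8), comm (g 4) (g 9),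
   comm (g 8) (g 5), comm (g 8) (g 6), comm (g 8) (g 7), comm (g 8) (g 9),
   comm (g 7) (g 5), comm (g 7) (g 6), comm (g 7) (g 9),
   braid (g 1) (g 0), braid (g 2) (g 0), braid (g 3) (g 0),
   g 4 * g 5 * ((g 1 * g 2 * g 0) ^ 4)⁻¹,
   g 6 * g 7 * ((g 1 * g 3 * g 0) ^ 4)⁻¹,
   g 8 * g 9 * ((g 2 * g 3 * g 0) ^ 4)⁻¹,
   g 4 * g 8 * g 7 * ((g 1 * g 2 * g 3 * g 0) ^ 3)⁻¹}

/-- The Gervais presentation of the pure mapping class group `PMod(1,3,0)`. -/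
abbrev G130 : Type := PresentedGroup G130rels

namespace G130proof

set_option linter.unusedSimpArgs false

theorem lcomm {G : Type*} [Group G] {x y : G} (h : y * x = x * y) (c : G) :
    y * (x * c) = x * (y * c) := by
  rw [← mul_assoc, h, mul_assoc]

/-- In the Artin group of type `A₃`, the Garside element `(xyz)²` swaps the two end generators. -/
theorem a3_swap {G : Type*} [Group G] {x y z : G} (cxy : y * x = x * y)
    (hx : x * z * x = z * x * z) (hy : y * z * y = z * y * z) :
    SemiconjBy ((x * y * z) ^ 2) y x := by
  have e1 : x * (x * y * z) ^ 2 = (y * x) * (x * z * x) * (y * z) := by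
    simp only [pow_two, mul_assoc, cxy, lcomm cxy]
  have e2 : (y * x) * (z * x * z) * (y * z) = (y * x * z * x) * (z * y * z) := by
    simp only [mul_assoc]
  unfold SemiconjBy
  rw [e1, hx, e2, ← hy]
  simp only [pow_two, mul_assoc, cxy, lcomm cxy]

/-- `(xyz)⁴` is central in the Artin group of type `A₃`. -/
theorem a3_central {G : Type*} [Group G] {x y z : G} (cxy : y * x = x * y)
    (hx : x * z * x = z * x * z) (hy : y * z * y = z * y * z) :
    Commute x ((x * y * z) ^ 4) ∧ Commute y ((x * y * z) ^ 4) ∧ Commute z ((x * y * z) ^ 4) := by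
  have s1 := a3_swap cxy hx hy
  have s2 := a3_swap cxy.symm hy hx
  rw [cxy] at s2
  have e : (x * y * z) ^ 4 = (x * y * z) ^ 2 * (x * y * z) ^ 2 := by rw [← pow_add]
  have k1 : Commute ((x * y * z) ^ 4) x := by rw [e]; exact s1.mul_left s2
  have k2 : Commute ((x * y * z) ^ 4) y := by rw [e]; exact s2.mul_left s1
  refine ⟨k1.symm, k2.symm, ?_⟩
  have k3 : Commute ((x * y * z) ^ 4) (x * y * z) := (Commute.refl _).pow_left 4
  have k4 := (k1.mul_right k2).inv_right.mul_right k3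
  rw [inv_mul_cancel_left] at k4
  exact k4.symm

/-- `(xytz)³` commutes with `x` in the Artin group of type `D₄`. -/
theorem d4_x {G : Type*} [Group G] {x y t z : G} (cxy : y * x = x * y)
    (cxt : t * x = x * t) (cyt : t * y = y * t) (hx : x * z * x = z * x * z)
    (hy : y * z * y = z * y * z) (ht : t * z * t = z * t * z) :
    Commute x ((x * y * t * z) ^ 3) := by
  have e1 : x * (x * y * t * z) ^ 3
      = (t * x * y) * (x * z * x) * (t * y * z * t * x * y * z) := by
    simp only [pow_succ, pow_zero, one_mul, mul_assoc, cxy, cxt, cyt, lcomm cxy, lcomm cxt,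
      lcomm cyt]
  have e2 : (t * x * y) * (z * x * z) * (t * y * z * t * x * y * z)
      = (y * x * t * z * x * z * t) * (y * z * y) * (x * t * z) := by
    simp only [mul_assoc, cxy, cxt, cyt, lcomm cxy, lcomm cxt, lcomm cyt]
  have e3 : (y * x * t * z * x * z * t) * (z * y * z) * (x * t * z)
      = (x * y * t * z * x) * (z * t * z) * (y * z * x * t * z) := by
    simp only [mul_assoc, cxy, cxt, cyt, lcomm cxy, lcomm cxt, lcomm cyt]
  have e4 : (x * y * t * z * x) * (t * z * t) * (y * z * x * t * z)
      = (y * t * x * z * x * t * z * y) * (t * z * t) * (x * z) := by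
    simp only [mul_assoc, cxy, cxt, cyt, lcomm cxy, lcomm cxt, lcomm cyt]
  have e5 : (y * t * x * z * x * t * z * y) * (z * t * z) * (x * z)
      = (y * x * t * z * x * t) * (z * y * z) * (t * z * x * z) := by
    simp only [mul_assoc, cxy, cxt, cyt, lcomm cxy, lcomm cxt, lcomm cyt]
  have e6 : (y * x * t * z * x * t) * (y * z * y) * (t * z * x * z)
      = (t * x * y * z * x * t * y * z * t * y) * (z * x * z) := by
    simp only [mul_assoc, cxy, cxt, cyt, lcomm cxy, lcomm cxt, lcomm cyt]
  unfold Commute SemiconjBy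
  rw [e1, hx, e2, hy, e3, ← ht, e4, ht, e5, ← hy, e6, ← hx]
  simp only [pow_succ, pow_zero, one_mul, mul_assoc, cxy, cxt, cyt, lcomm cxy, lcomm cxt,
    lcomm cyt]

/-- `(xytz)³` is central in the Artin group of type `D₄`. -/
theorem d4_central {G : Type*} [Group G] {x y t z : G} (cxy : y * x = x * y)
    (cxt : t * x = x * t) (cyt : t * y = y * t) (hx : x * z * x = z * x * z)
    (hy : y * z * y = z * y * z) (ht : t * z * t = z * t * z) :
    Commute x ((x * y * t * z) ^ 3) ∧ Commute y ((x * y * t * z) ^ 3) ∧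
      Commute t ((x * y * t * z) ^ 3) ∧ Commute z ((x * y * t * z) ^ 3) := by
  have k1 := (d4_x cxy cxt cyt hx hy ht).symm
  have k2 := (d4_x cxy.symm cyt cxt hy hx ht).symm
  have k3 := (d4_x cxt.symm cyt.symm cxy.symm.symm ht hx hy).symm
  rw [cxy] at k2
  rw [show t * x * y = x * y * t by rw [mul_assoc, lcomm cxt, cyt, mul_assoc]] at k3
  refine ⟨k1.symm, k2.symm, k3.symm, ?_⟩
  have k4 : Commute ((x * y * t * z) ^ 3) (x * y * t * z) := (Commute.refl _).pow_left 3
  have k5 := ((k1.mul_right k2).mul_right k3).inv_right.mul_right k4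
  rw [inv_mul_cancel_left] at k5
  exact k5.symm

/-! ### The Artin group -/

/-- generators of `A(D₄)` -/
def s (i : Fin 4) : AD4 := PresentedGroup.of i

theorem AD4_rel (x y : FreeGroup (Fin 4)) (h : x * y⁻¹ ∈ AD4rels) :
    PresentedGroup.mk AD4rels x = PresentedGroup.mk AD4rels y :=
  PresentedGroup.mk_eq_mk_of_mul_inv_mem h

theorem s01 : s 1 * s 0 = s 0 * s 1 := (AD4_rel (FreeGroup.of 0 * FreeGroup.of 1) (FreeGroup.of 1 * FreeGroup.of 0) (by simp [AD4rels])).symm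
theorem s02 : s 2 * s 0 = s 0 * s 2 := (AD4_rel (FreeGroup.of 0 * FreeGroup.of 2) (FreeGroup.of 2 * FreeGroup.of 0) (by simp [AD4rels])).symm
theorem s12 : s 2 * s 1 = s 1 * s 2 := (AD4_rel (FreeGroup.of 1 * FreeGroup.of 2) (FreeGroup.of 2 * FreeGroup.of 1) (by simp [AD4rels])).symm
theorem s03 : s 0 * s 3 * s 0 = s 3 * s 0 * s 3 :=
  AD4_rel (FreeGroup.of 0 * FreeGroup.of 3 * FreeGroup.of 0)
    (FreeGroup.of 3 * FreeGroup.of 0 * FreeGroup.of 3) (by simp [AD4rels])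
theorem s13 : s 1 * s 3 * s 1 = s 3 * s 1 * s 3 :=
  AD4_rel (FreeGroup.of 1 * FreeGroup.of 3 * FreeGroup.of 1)
    (FreeGroup.of 3 * FreeGroup.of 1 * FreeGroup.of 3) (by simp [AD4rels])
theorem s23 : s 2 * s 3 * s 2 = s 3 * s 2 * s 3 :=
  AD4_rel (FreeGroup.of 2 * FreeGroup.of 3 * FreeGroup.of 2)
    (FreeGroup.of 3 * FreeGroup.of 2 * FreeGroup.of 3) (by simp [AD4rels])

/-- The Garside element. -/
def D : AD4 := (s 0 * s 1 * s 2 * s 3) ^ 3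

theorem D_comm (x : AD4) : Commute x D := by
  obtain ⟨h0, h1, h2, h3⟩ := d4_central s01 s02 s12 s03 s13 s23
  have : x ∈ Subgroup.centralizer {D} := by
    apply PresentedGroup.generated_by
    intro i
    rw [Subgroup.mem_centralizer_singleton_iff]
    fin_cases i
    exacts [h0, h1, h2, h3]
  exact Subgroup.mem_centralizer_singleton_iff.1 this

/-- The map to the first factor, on generators. -/
def f1 : Fin 10 → AD4 :=
  ![s 3, s 0, s 1, s 2, 1, (s 0 * s 1 * s 3) ^ 4, (s 0 * s 2 * s 3) ^ 4 * D⁻¹, D, 1,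
    (s 1 * s 2 * s 3) ^ 4]

theorem f1_rel : ∀ r ∈ G130rels, FreeGroup.lift f1 r = 1 := by
  obtain ⟨p1, p2, p3⟩ := a3_central s01 s03 s13
  obtain ⟨q1, q2, q3⟩ := a3_central s02 s03 s23
  obtain ⟨r1, r2, r3⟩ := a3_central s12 s13 s23
  have q1' := q1.mul_right (D_comm _).inv_right
  have q2' := q2.mul_right (D_comm _).inv_right
  have q3' := q3.mul_right (D_comm _).inv_right
  simp only [G130rels, Set.mem_insert_iff, Set.mem_singleton_iff, forall_eq_or_imp, forall_eq]
  simp only [G130aux.comm, G130aux.braid, G130aux.g, map_mul, map_inv, map_pow,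
    FreeGroup.lift_apply_of, mul_inv_eq_one]
  simp only [f1, Matrix.cons_val, one_mul, mul_one, inv_mul_cancel_right]
  repeat' apply And.intro
  all_goals first
    | exact trivial
    | exact s01.symm | exact s02.symm | exact s12.symm | exact s03 | exact s13 | exact s23
    | exact p1 | exact p2 | exact p3 | exact q1' | exact q2' | exact q3'
    | exact r1 | exact r2 | exact r3
    | exact D_comm _ | exact (D_comm _).symm
    | rfl
    | rw [← mul_assoc, ← (D_comm _).eq, mul_inv_cancel_right]

/-- The abelian factor. -/
abbrev Z2 : Type := Multiplicative (Fin 2 → ℤ)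

/-- first basis vector -/
def u : Z2 := Multiplicative.ofAdd (Pi.single 0 1)
/-- second basis vector -/
def v : Z2 := Multiplicative.ofAdd (Pi.single 1 1)

/-- The map to the second factor, on generators. -/
def f2 : Fin 10 → Z2 := ![1, 1, 1, 1, u, u⁻¹, u * v, (u * v)⁻¹, v, v⁻¹]

theorem f2_rel : ∀ r ∈ G130rels, FreeGroup.lift f2 r = 1 := by
  simp only [G130rels, Set.mem_insert_iff, Set.mem_singleton_iff, forall_eq_or_imp, forall_eq]
  simp only [G130aux.comm, G130aux.braid, G130aux.g, map_mul, map_inv, map_pow,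
    FreeGroup.lift_apply_of, mul_inv_eq_one]
  simp only [f2, Matrix.cons_val, one_mul, mul_one, one_pow, mul_inv_cancel, inv_mul_cancel]
  repeat' apply And.intro
  all_goals first
    | exact trivial
    | exact mul_comm (G := Z2) _ _

/-- The forward homomorphism. -/
def Φ : G130 →* AD4 × Z2 :=
  (PresentedGroup.toGroup f1_rel).prod (PresentedGroup.toGroup f2_rel)

theorem Φ_of (i : Fin 10) : Φ (PresentedGroup.of i) = (f1 i, f2 i) := by
  simp [Φ]

/-! ### The inverse -/

/-- generators of `G₁₃₀` -/
def t (i : Fin 10) : G130 := PresentedGroup.of i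

theorem G130_rel (x y : FreeGroup (Fin 10)) (h : x * y⁻¹ ∈ G130rels) :
    PresentedGroup.mk G130rels x = PresentedGroup.mk G130rels y :=
  PresentedGroup.mk_eq_mk_of_mul_inv_mem h

open G130aux in
theorem t_comm (i j : Fin 10) (h : comm (g i) (g j) ∈ G130rels) : t i * t j = t j * t i :=
  G130_rel (g i * g j) (g j * g i) h

open G130aux in
theorem t_braid (i j : Fin 10) (h : braid (g i) (g j) ∈ G130rels) :
    t i * t j * t i = t j * t i * t j :=
  G130_rel (g i * g j * g i) (g j * g i * g j) h

theorem t_central (x : G130) (h : ∀ i, t i * x = x * t i) (y : G130) : Commute y x := by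
  have : y ∈ Subgroup.centralizer {x} := by
    apply PresentedGroup.generated_by
    intro i
    rw [Subgroup.mem_centralizer_singleton_iff]
    exact h i
  exact Subgroup.mem_centralizer_singleton_iff.1 this

theorem t4_central (y : G130) : Commute y (t 4) := by
  apply t_central
  intro i
  fin_cases i
  exacts [t_comm 0 4 (by simp [G130rels]),
      t_comm 1 4 (by simp [G130rels]),
      t_comm 2 4 (by simp [G130rels]),
      t_comm 3 4 (by simp [G130rels]),
      rfl,
      (t_comm 4 5 (by simp [G130rels])).symm,
      (t_comm 4 6 (by simp [G130rels])).symm,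
      (t_comm 4 7 (by simp [G130rels])).symm,
      (t_comm 4 8 (by simp [G130rels])).symm,
      (t_comm 4 9 (by simp [G130rels])).symm]

theorem t8_central (y : G130) : Commute y (t 8) := by
  apply t_central
  intro i
  fin_cases i
  exacts [t_comm 0 8 (by simp [G130rels]),
      t_comm 1 8 (by simp [G130rels]),
      t_comm 2 8 (by simp [G130rels]),
      t_comm 3 8 (by simp [G130rels]),
      t_comm 4 8 (by simp [G130rels]),
      (t_comm 8 5 (by simp [G130rels])).symm,
      (t_comm 8 6 (by simp [G130rels])).symm,
      (t_comm 8 7 (by simp [G130rels])).symm,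
      rfl,
      (t_comm 8 9 (by simp [G130rels])).symm]

/-- The inverse on the Artin generators. -/
def k : Fin 4 → G130 := ![t 1, t 2, t 3, t 0]

theorem k_rel : ∀ r ∈ AD4rels, FreeGroup.lift k r = 1 := by
  simp only [AD4rels, Set.mem_insert_iff, Set.mem_singleton_iff, forall_eq_or_imp, forall_eq]
  simp only [map_mul, map_inv, FreeGroup.lift_apply_of, mul_inv_eq_one]
  simp only [k, Matrix.cons_val]
  exact ⟨t_comm 1 2 (by simp [G130rels]), t_comm 1 3 (by simp [G130rels]),
    t_comm 2 3 (by simp [G130rels]), t_braid 1 0 (by simp [G130rels]),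
    t_braid 2 0 (by simp [G130rels]), t_braid 3 0 (by simp [G130rels])⟩

/-- `A(D₄) → G₁₃₀` -/
def ψ : AD4 →* G130 := PresentedGroup.toGroup k_rel

theorem ψ_s (i : Fin 4) : ψ (s i) = k i := by
  simp [ψ, s]

/-- `ℤ² → G₁₃₀` -/
def ζ : Z2 →* G130 :=
  MonoidHom.mk' (fun n => t 4 ^ (n.toAdd 0) * t 8 ^ (n.toAdd 1)) (by
    intro m n
    simp only [toAdd_mul, Pi.add_apply, zpow_add]
    have h : Commute (t 8 ^ (m.toAdd 1)) (t 4 ^ (n.toAdd 0)) := (t4_central _).zpow_right _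
    simp only [mul_assoc]
    rw [← mul_assoc (t 4 ^ (n.toAdd 0)), ← h.eq, mul_assoc])

theorem ζ_apply (n : Z2) : ζ n = t 4 ^ (n.toAdd 0) * t 8 ^ (n.toAdd 1) := rfl

/-- The backward homomorphism. -/
def Ψ : AD4 × Z2 →* G130 :=
  MonoidHom.noncommCoprod ψ ζ (fun m n => by
    rw [ζ_apply]
    exact ((t4_central _).zpow_right _).mul_right ((t8_central _).zpow_right _))

theorem Ψ_apply (m : AD4) (n : Z2) : Ψ (m, n) = ψ m * ζ n := rfl

theorem ζ_u : ζ u = t 4 := by simp [ζ_apply, u]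
theorem ζ_v : ζ v = t 8 := by simp [ζ_apply, v]

open G130aux in
theorem star12 : t 4 * t 5 = (t 1 * t 2 * t 0) ^ 4 :=
  G130_rel (g 4 * g 5) ((g 1 * g 2 * g 0) ^ 4) (by simp [G130rels])

open G130aux in
theorem star13 : t 6 * t 7 = (t 1 * t 3 * t 0) ^ 4 :=
  G130_rel (g 6 * g 7) ((g 1 * g 3 * g 0) ^ 4) (by simp [G130rels])

open G130aux in
theorem star23 : t 8 * t 9 = (t 2 * t 3 * t 0) ^ 4 :=
  G130_rel (g 8 * g 9) ((g 2 * g 3 * g 0) ^ 4) (by simp [G130rels])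

open G130aux in
theorem star123 : t 4 * t 8 * t 7 = (t 1 * t 2 * t 3 * t 0) ^ 3 :=
  G130_rel (g 4 * g 8 * g 7) ((g 1 * g 2 * g 3 * g 0) ^ 3) (by simp [G130rels])

theorem ψ_D : ψ D = t 4 * t 8 * t 7 := by
  simp [D, ψ_s, k, star123]

theorem ΨΦ (i : Fin 10) : Ψ (f1 i, f2 i) = t i := by
  have hc (y : G130) : Commute y (t 4 * t 8) := (t4_central y).mul_right (t8_central y)
  rw [Ψ_apply]
  fin_cases i
  all_goals simp [f1, f2, ψ_s, k, ζ_u, ζ_v, ψ_D, ← star12, ← star13, ← star23]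
  · rw [(t4_central (t 5)).symm.eq, mul_inv_cancel_right]
  · group
  · rw [← (hc (t 7)).eq]
    group
  · rw [(t8_central (t 9)).symm.eq, mul_inv_cancel_right]

theorem Φψ (m : AD4) : Φ (ψ m) = (m, 1) := by
  have : Φ.comp ψ = MonoidHom.inl AD4 Z2 := by
    apply PresentedGroup.ext
    intro i
    change Φ (ψ (s i)) = (s i, 1)
    rw [ψ_s]
    fin_cases i <;> exact Φ_of _
  exact DFunLike.congr_fun this m

theorem Φζ (n : Z2) : Φ (ζ n) = (1, n) := by
  rw [ζ_apply, map_mul, map_zpow, map_zpow, t, t, Φ_of, Φ_of]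
  refine Prod.ext ?_ ?_
  · simp [f1]
  · change u ^ (n.toAdd 0) * v ^ (n.toAdd 1) = n
    apply Multiplicative.toAdd.injective
    ext i
    fin_cases i <;> simp [u, v]

end G130proof

open G130proof in
/-- Proposition 8: `PMod(1,3,0)`, given by the Gervais presentation, is isomorphic to
`A(D₄) × ℤ²`. -/
theorem stmt_5 : Nonempty (G130 ≃* AD4 × Multiplicative (Fin 2 → ℤ)) := by
  refine ⟨MonoidHom.toMulEquiv Φ Ψ ?_ ?_⟩
  · apply PresentedGroup.ext
    intro i
    change Ψ (Φ (PresentedGroup.of i)) = PresentedGroup.of i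
    rw [Φ_of]
    exact ΨΦ i
  · ext1 ⟨m, n⟩
    change Φ (Ψ (m, n)) = (m, n)
    rw [Ψ_apply, map_mul, Φψ, Φζ]
    simp
end

section
/- The group G₁₃₀ is isomorphic to the quotient of the direct product A(D4) × ℤ³ by the normal closure of the single element (((a1*a2*a3*b)^3)⁻¹, u1*u2*u3), where u1, u2, u3 is the standard basis of ℤ³ (corresponding to the generators c12, c23, c31) and the star relation identifies c12c23c31 with (a1a2a3b)^3. -/
/-- The standard basis of the free abelian group `ℤ³` (written multiplicatively). -/
def u (i : Fin 3) : Multiplicative (Fin 3 → ℤ) := Multiplicative.ofAdd (Pi.single i 1)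

/-- The fundamental element `Δ = (a1 a2 a3 b)^3` of `A(D₄)`. -/
def Δ : AD4 :=
  (PresentedGroup.of 0 * PresentedGroup.of 1 * PresentedGroup.of 2 * PresentedGroup.of 3) ^ 3

/-- The normal closure of the single element `(Δ⁻¹, u₁ u₂ u₃)` in `A(D₄) × ℤ³`. -/
def N : Subgroup (AD4 × Multiplicative (Fin 3 → ℤ)) :=
  Subgroup.normalClosure {(Δ⁻¹, u 0 * u 1 * u 2)}

instance : N.Normal := Subgroup.normalClosure_normal

section helpers
variable {H : Type*} [Group H]

/-- In a quotient of the braid group on four strands, `(a c b)^2` is the half twist: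
it swaps `a` and `c` and fixes `b`. -/
theorem half_twist_left (a c b : H) (hac : a * c = c * a) (hab : a * b * a = b * a * b)
    (hcb : c * b * c = b * c * b) :
    (a * c * b) ^ 2 * a = c * (a * c * b) ^ 2 := by
  calc (a * c * b) ^ 2 * a = a * c * b * (a * c) * b * a := by simp only [pow_two, mul_assoc]
    _ = a * c * b * c * (a * b * a) := by rw [hac]; group
    _ = a * c * (b * c * b) * a * b := by rw [hab]; group
    _ = a * c * c * b * (c * a) * b := by rw [← hcb]; group
    _ = (a * c) * c * b * (a * c) * b := by rw [← hac]
    _ = c * (a * c * b) ^ 2 := by rw [hac, pow_two]; simp only [mul_assoc, hac]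

theorem half_twist_mid (a c b : H) (hac : a * c = c * a) (hab : a * b * a = b * a * b)
    (hcb : c * b * c = b * c * b) :
    (a * c * b) ^ 2 * b = b * (a * c * b) ^ 2 := by
  have h : (a * c * b) ^ 2 = b * (a * c) * b * (a * c) := by
    calc (a * c * b) ^ 2 = a * c * b * (a * c) * b := by simp only [pow_two, mul_assoc]
      _ = a * (c * b * c) * a * b := by rw [hac]; group; rw [hac]
      _ = a * b * c * (b * a * b) := by rw [hcb]; group
      _ = a * b * (c * a) * b * a := by rw [← hab]; group
      _ = (a * b * a) * c * b * a := by rw [← hac]; group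
      _ = b * a * (b * c * b) * a := by rw [hab]; group
      _ = b * a * c * b * (c * a) := by rw [← hcb]; group
      _ = b * (a * c) * b * (a * c) := by rw [← hac]; group
  calc (a * c * b) ^ 2 * b = b * (a * c) * b * (a * c) * b := by rw [h]
    _ = b * (a * c * b) ^ 2 := by simp only [pow_two, mul_assoc]

/-- The full twist `(a c b)^4` commutes with `a`, `c` and `b`. -/
theorem full_twist (a c b : H) (hac : Commute a c) (hab : a * b * a = b * a * b)
    (hcb : c * b * c = b * c * b) :
    Commute a ((a * c * b) ^ 4) ∧ Commute c ((a * c * b) ^ 4) ∧ Commute b ((a * c * b) ^ 4) := by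
  have e : (a * c * b) ^ 4 = (a * c * b) ^ 2 * (a * c * b) ^ 2 := by rw [← pow_add]
  have h1 := half_twist_left a c b hac hab hcb
  have h2 := half_twist_left c a b hac.symm hcb hab
  rw [← hac.eq] at h2
  have h3 := half_twist_mid a c b hac hab hcb
  refine ⟨Commute.symm ?_, Commute.symm ?_, ?_⟩
  · change _ * _ = _ * _
    rw [e, mul_assoc, h1, ← mul_assoc, h2, mul_assoc]
  · change _ * _ = _ * _
    rw [e, mul_assoc, h2, ← mul_assoc, h1, mul_assoc]
  · have h4 : Commute b ((a * c * b) ^ 2) := h3.symm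
    rw [e]
    exact h4.mul_right h4

open G130aux in
theorem lift_comm (f : Fin 10 → H) (i j : Fin 10) :
    FreeGroup.lift f (comm (g i) (g j)) = 1 ↔ Commute (f i) (f j) := by
  simp only [G130aux.comm, g, map_mul, map_inv, FreeGroup.lift_apply_of, mul_inv_eq_one]
  rfl

open G130aux in
theorem lift_braid (f : Fin 10 → H) (i j : Fin 10) :
    FreeGroup.lift f (braid (g i) (g j)) = 1 ↔ f i * f j * f i = f j * f i * f j := by
  simp only [braid, g, map_mul, map_inv, FreeGroup.lift_apply_of, mul_inv_eq_one]

/-- The images of the ten generators, in terms of `a1, a2, a3, b` and central elements. -/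
def genMap (a1 a2 a3 b z0 z1 z2 : H) : Fin 10 → H :=
  ![b, a1, a2, a3, z0, z0⁻¹ * (a1 * a2 * b) ^ 4, z2⁻¹ * (a1 * a3 * b) ^ 4, z2, z1,
    z1⁻¹ * (a2 * a3 * b) ^ 4]

theorem genMap_rels (a1 a2 a3 b z0 z1 z2 : H) (h12 : Commute a1 a2) (h13 : Commute a1 a3)
    (h23 : Commute a2 a3) (hb1 : a1 * b * a1 = b * a1 * b) (hb2 : a2 * b * a2 = b * a2 * b)
    (hb3 : a3 * b * a3 = b * a3 * b) (hz0 : ∀ x, Commute x z0) (hz1 : ∀ x, Commute x z1)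
    (hz2 : ∀ x, Commute x z2) (hs : z0 * z1 * z2 = (a1 * a2 * a3 * b) ^ 3) :
    ∀ r ∈ G130rels, FreeGroup.lift (genMap a1 a2 a3 b z0 z1 z2) r = 1 := by
  obtain ⟨p1, p2, p3⟩ := full_twist a1 a2 b h12 hb1 hb2
  obtain ⟨q1, q2, q3⟩ := full_twist a1 a3 b h13 hb1 hb3
  obtain ⟨r1, r2, r3⟩ := full_twist a2 a3 b h23 hb2 hb3
  have k0 : ∀ x y, Commute x y → Commute x (z0⁻¹ * y) := fun x y h =>
    (hz0 x).inv_right.mul_right h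
  have k1 : ∀ x y, Commute x y → Commute x (z1⁻¹ * y) := fun x y h =>
    (hz1 x).inv_right.mul_right h
  have k2 : ∀ x y, Commute x y → Commute x (z2⁻¹ * y) := fun x y h =>
    (hz2 x).inv_right.mul_right h
  simp only [G130rels, Set.mem_insert_iff, Set.mem_singleton_iff, forall_eq_or_imp, forall_eq,
    lift_comm, lift_braid]
  refine ⟨h12, h13, h23, hz0 _, k0 _ _ p1, k2 _ _ q1, hz2 _, hz1 _,
    hz0 _, k0 _ _ p2, hz2 _, hz1 _, k1 _ _ r1,
    hz0 _, k2 _ _ q2, hz2 _, hz1 _, k1 _ _ r2,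
    hz0 _, k0 _ _ p3, k2 _ _ q3, hz2 _, hz1 _, k1 _ _ r3,
    (hz0 _).symm, (hz0 _).symm, (hz0 _).symm, (hz0 _).symm, (hz0 _).symm,
    (hz1 _).symm, (hz1 _).symm, (hz1 _).symm, (hz1 _).symm,
    (hz2 _).symm, (hz2 _).symm, (hz2 _).symm, hb1, hb2, hb3, ?_, ?_, ?_, ?_⟩ <;>
  simp only [G130aux.g, map_mul, map_inv, map_pow, FreeGroup.lift_apply_of, mul_inv_eq_one]
  · exact mul_inv_cancel_left _ _
  · change z2⁻¹ * (a1 * a3 * b) ^ 4 * z2 = (a1 * a3 * b) ^ 4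
    rw [(hz2 _).eq, mul_inv_cancel_left]
  · exact mul_inv_cancel_left _ _
  · exact hs

end helpers

section inverse

open G130aux in
theorem g_comm (i j : Fin 10) (h : comm (g i) (g j) ∈ G130rels) :
    Commute (PresentedGroup.of i : G130) (PresentedGroup.of j) := by
  have := PresentedGroup.one_of_mem h
  simp only [G130aux.comm, g, map_mul, map_inv, mul_inv_eq_one] at this
  exact this

open G130aux in
theorem g_braid (i j : Fin 10) (h : braid (g i) (g j) ∈ G130rels) :
    (PresentedGroup.of i : G130) * PresentedGroup.of j * PresentedGroup.of i =
      PresentedGroup.of j * PresentedGroup.of i * PresentedGroup.of j := by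
  have := PresentedGroup.one_of_mem h
  simp only [braid, g, map_mul, map_inv, mul_inv_eq_one] at this
  exact this

theorem central_of (k : Fin 10)
    (h : ∀ i, Commute (PresentedGroup.of i : G130) (PresentedGroup.of k)) :
    (PresentedGroup.of k : G130) ∈ Subgroup.center G130 := by
  rw [Subgroup.mem_center_iff]
  intro x
  have hx : x ∈ Subgroup.closure (Set.range (PresentedGroup.of : Fin 10 → G130)) := by
    rw [PresentedGroup.closure_range_of]; trivial
  have hle : Subgroup.closure (Set.range (PresentedGroup.of : Fin 10 → G130)) ≤
      Subgroup.centralizer {PresentedGroup.of k} := by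
    rw [Subgroup.closure_le]
    rintro _ ⟨i, rfl⟩
    rw [SetLike.mem_coe, Subgroup.mem_centralizer_singleton_iff]
    exact h i
  exact Subgroup.mem_centralizer_singleton_iff.mp (hle hx)

theorem c12_central : (PresentedGroup.of 4 : G130) ∈ Subgroup.center G130 := by
  refine central_of 4 fun i => ?_
  fin_cases i
  all_goals first
    | exact Commute.refl _
    | (refine g_comm _ _ ?_
       simp only [G130rels, Set.mem_insert_iff, Set.mem_singleton_iff, true_or, or_true,
         Fin.zero_eta, Fin.mk_one, Fin.reduceFinMk]; done)
    | (refine (g_comm _ _ ?_).symm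
       simp only [G130rels, Set.mem_insert_iff, Set.mem_singleton_iff, true_or, or_true,
         Fin.zero_eta, Fin.mk_one, Fin.reduceFinMk]; done)

theorem c23_central : (PresentedGroup.of 8 : G130) ∈ Subgroup.center G130 := by
  refine central_of 8 fun i => ?_
  fin_cases i
  all_goals first
    | exact Commute.refl _
    | (refine g_comm _ _ ?_
       simp only [G130rels, Set.mem_insert_iff, Set.mem_singleton_iff, true_or, or_true,
         Fin.zero_eta, Fin.mk_one, Fin.reduceFinMk]; done)
    | (refine (g_comm _ _ ?_).symm
       simp only [G130rels, Set.mem_insert_iff, Set.mem_singleton_iff, true_or, or_true,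
         Fin.zero_eta, Fin.mk_one, Fin.reduceFinMk]; done)

theorem c31_central : (PresentedGroup.of 7 : G130) ∈ Subgroup.center G130 := by
  refine central_of 7 fun i => ?_
  fin_cases i
  all_goals first
    | exact Commute.refl _
    | (refine g_comm _ _ ?_
       simp only [G130rels, Set.mem_insert_iff, Set.mem_singleton_iff, true_or, or_true,
         Fin.zero_eta, Fin.mk_one, Fin.reduceFinMk]; done)
    | (refine (g_comm _ _ ?_).symm
       simp only [G130rels, Set.mem_insert_iff, Set.mem_singleton_iff, true_or, or_true,
         Fin.zero_eta, Fin.mk_one, Fin.reduceFinMk]; done)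

/-- The homomorphism from `ℤ³` to a commutative group with prescribed values on the basis. -/
def zHom {C : Type*} [CommGroup C] (x y z : C) : Multiplicative (Fin 3 → ℤ) →* C :=
  MonoidHom.mk' (fun n => x ^ (n.toAdd 0) * y ^ (n.toAdd 1) * z ^ (n.toAdd 2)) (by
    intro m n
    simp only [toAdd_mul, Pi.add_apply, zpow_add]
    exact (by
      rw [mul_mul_mul_comm (x ^ (m.toAdd 0)), mul_mul_mul_comm]))

theorem zHom_apply {C : Type*} [CommGroup C] (x y z : C) (n : Multiplicative (Fin 3 → ℤ)) :
    zHom x y z n = x ^ (n.toAdd 0) * y ^ (n.toAdd 1) * z ^ (n.toAdd 2) := rfl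

theorem zHom_u0 {C : Type*} [CommGroup C] (x y z : C) : zHom x y z (u 0) = x := by
  simp [zHom_apply, u]

theorem zHom_u1 {C : Type*} [CommGroup C] (x y z : C) : zHom x y z (u 1) = y := by
  simp [zHom_apply, u]

theorem zHom_u2 {C : Type*} [CommGroup C] (x y z : C) : zHom x y z (u 2) = z := by
  simp [zHom_apply, u]

theorem z_decomp (n : Multiplicative (Fin 3 → ℤ)) :
    n = u 0 ^ (n.toAdd 0) * u 1 ^ (n.toAdd 1) * u 2 ^ (n.toAdd 2) := by
  apply Multiplicative.toAdd.injective
  funext i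
  fin_cases i <;> simp [u]

/-- The homomorphism `A(D₄) → G130`. -/
def artinHom : AD4 →* G130 :=
  PresentedGroup.toGroup (rels := AD4rels)
    (f := ![PresentedGroup.of 1, PresentedGroup.of 2, PresentedGroup.of 3, PresentedGroup.of 0])
    (by
      simp only [AD4rels, Set.mem_insert_iff, Set.mem_singleton_iff, forall_eq_or_imp, forall_eq,
        map_mul, map_inv, FreeGroup.lift_apply_of, mul_inv_eq_one]
      refine ⟨g_comm 1 2 ?_, g_comm 1 3 ?_, g_comm 2 3 ?_, g_braid 1 0 ?_, g_braid 2 0 ?_,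
        g_braid 3 0 ?_⟩ <;>
      simp only [G130rels, Set.mem_insert_iff, Set.mem_singleton_iff, true_or, or_true])

theorem artinHom_of (i : Fin 4) : artinHom (PresentedGroup.of i) =
    (![PresentedGroup.of 1, PresentedGroup.of 2, PresentedGroup.of 3, PresentedGroup.of 0] :
      Fin 4 → G130) i := PresentedGroup.toGroup.of _

/-- The centre of `G130` is a commutative group. -/
instance centerCommGroup : CommGroup (Subgroup.center G130) :=
  { (inferInstance : Group (Subgroup.center G130)) with
    mul_comm := fun x y => Subtype.ext (Subgroup.mem_center_iff.mp y.2 x) }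

/-- The homomorphism `ℤ³ → Z(G130)`. -/
def latticeHom : Multiplicative (Fin 3 → ℤ) →* Subgroup.center G130 :=
  zHom (C := Subgroup.center G130) ⟨PresentedGroup.of 4, c12_central⟩
    ⟨PresentedGroup.of 8, c23_central⟩ ⟨PresentedGroup.of 7, c31_central⟩

/-- The homomorphism `A(D₄) × ℤ³ → G130`. -/
def prodHom : AD4 × Multiplicative (Fin 3 → ℤ) →* G130 :=
  MonoidHom.noncommCoprod artinHom ((Subgroup.center G130).subtype.comp latticeHom)
    (fun m n => (Subgroup.mem_center_iff.mp (latticeHom n).2 (artinHom m)))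

theorem prodHom_apply (m : AD4) (n : Multiplicative (Fin 3 → ℤ)) :
    prodHom (m, n) = artinHom m * (latticeHom n : G130) := rfl

open G130aux in
theorem star_rel : (PresentedGroup.of 4 : G130) * PresentedGroup.of 8 * PresentedGroup.of 7 =
    (PresentedGroup.of 1 * PresentedGroup.of 2 * PresentedGroup.of 3 * PresentedGroup.of 0) ^ 3 := by
  have h : g 4 * g 8 * g 7 * ((g 1 * g 2 * g 3 * g 0) ^ 3)⁻¹ ∈ G130rels := by
    simp only [G130rels, Set.mem_insert_iff, Set.mem_singleton_iff, true_or, or_true]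
  have := PresentedGroup.one_of_mem h
  simp only [g, map_mul, map_inv, map_pow, mul_inv_eq_one] at this
  exact this

open G130aux in
theorem star12 : (PresentedGroup.of 4 : G130) * PresentedGroup.of 5 =
    (PresentedGroup.of 1 * PresentedGroup.of 2 * PresentedGroup.of 0) ^ 4 := by
  have h : g 4 * g 5 * ((g 1 * g 2 * g 0) ^ 4)⁻¹ ∈ G130rels := by
    simp only [G130rels, Set.mem_insert_iff, Set.mem_singleton_iff, true_or, or_true]
  have := PresentedGroup.one_of_mem h
  simp only [g, map_mul, map_inv, map_pow, mul_inv_eq_one] at this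
  exact this

open G130aux in
theorem star13 : (PresentedGroup.of 6 : G130) * PresentedGroup.of 7 =
    (PresentedGroup.of 1 * PresentedGroup.of 3 * PresentedGroup.of 0) ^ 4 := by
  have h : g 6 * g 7 * ((g 1 * g 3 * g 0) ^ 4)⁻¹ ∈ G130rels := by
    simp only [G130rels, Set.mem_insert_iff, Set.mem_singleton_iff, true_or, or_true]
  have := PresentedGroup.one_of_mem h
  simp only [g, map_mul, map_inv, map_pow, mul_inv_eq_one] at this
  exact this

open G130aux in
theorem star23 : (PresentedGroup.of 8 : G130) * PresentedGroup.of 9 =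
    (PresentedGroup.of 2 * PresentedGroup.of 3 * PresentedGroup.of 0) ^ 4 := by
  have h : g 8 * g 9 * ((g 2 * g 3 * g 0) ^ 4)⁻¹ ∈ G130rels := by
    simp only [G130rels, Set.mem_insert_iff, Set.mem_singleton_iff, true_or, or_true]
  have := PresentedGroup.one_of_mem h
  simp only [g, map_mul, map_inv, map_pow, mul_inv_eq_one] at this
  exact this

theorem prodHom_art (i : Fin 4) : prodHom (PresentedGroup.of i, 1) =
    (![PresentedGroup.of 1, PresentedGroup.of 2, PresentedGroup.of 3, PresentedGroup.of 0] :
      Fin 4 → G130) i := by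
  rw [prodHom_apply, map_one, artinHom_of, Subgroup.coe_one, mul_one]

theorem prodHom_u0 : prodHom (1, u 0) = PresentedGroup.of 4 := by
  rw [prodHom_apply, map_one, latticeHom, zHom_u0, one_mul]

theorem prodHom_u1 : prodHom (1, u 1) = PresentedGroup.of 8 := by
  rw [prodHom_apply, map_one, latticeHom, zHom_u1, one_mul]

theorem prodHom_u2 : prodHom (1, u 2) = PresentedGroup.of 7 := by
  rw [prodHom_apply, map_one, latticeHom, zHom_u2, one_mul]

theorem N_le_ker : N ≤ prodHom.ker := by
  apply Subgroup.normalClosure_le_normal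
  rw [Set.singleton_subset_iff, SetLike.mem_coe, MonoidHom.mem_ker, prodHom_apply, map_inv,
    inv_mul_eq_one, Δ, latticeHom, map_mul, map_mul, zHom_u0, zHom_u1, zHom_u2]
  simp only [map_pow, map_mul, artinHom_of]
  exact star_rel.symm

/-- The homomorphism from the quotient to `G130`. -/
def bwd : (AD4 × Multiplicative (Fin 3 → ℤ)) ⧸ N →* G130 :=
  QuotientGroup.lift N prodHom N_le_ker

theorem bwd_mk (x : AD4 × Multiplicative (Fin 3 → ℤ)) :
    bwd (QuotientGroup.mk' N x) = prodHom x := rfl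

end inverse

section forward

/-- The inclusion of `A(D₄)` followed by the quotient map. -/
def artQ : AD4 →* (AD4 × Multiplicative (Fin 3 → ℤ)) ⧸ N :=
  (QuotientGroup.mk' N).comp (MonoidHom.inl _ _)

/-- The inclusion of `ℤ³` followed by the quotient map. -/
def latQ : Multiplicative (Fin 3 → ℤ) →* (AD4 × Multiplicative (Fin 3 → ℤ)) ⧸ N :=
  (QuotientGroup.mk' N).comp (MonoidHom.inr _ _)

theorem latQ_comm (n : Multiplicative (Fin 3 → ℤ))
    (x : (AD4 × Multiplicative (Fin 3 → ℤ)) ⧸ N) : Commute x (latQ n) := by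
  obtain ⟨⟨m, k⟩, rfl⟩ := QuotientGroup.mk'_surjective N x
  refine Commute.map (f := QuotientGroup.mk' N) ?_
  exact Prod.ext (by simp) (mul_comm _ _)

theorem a_comm (i j : Fin 4) (h : FreeGroup.of i * FreeGroup.of j *
    (FreeGroup.of j * FreeGroup.of i)⁻¹ ∈ AD4rels) :
    Commute (PresentedGroup.of i : AD4) (PresentedGroup.of j) := by
  have := PresentedGroup.one_of_mem h
  simp only [map_mul, map_inv, mul_inv_eq_one] at this
  exact this

theorem a_braid (i j : Fin 4) (h : FreeGroup.of i * FreeGroup.of j * FreeGroup.of i *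
    (FreeGroup.of j * FreeGroup.of i * FreeGroup.of j)⁻¹ ∈ AD4rels) :
    artQ (PresentedGroup.of i) * artQ (PresentedGroup.of j) * artQ (PresentedGroup.of i) =
      artQ (PresentedGroup.of j) * artQ (PresentedGroup.of i) * artQ (PresentedGroup.of j) := by
  have := PresentedGroup.one_of_mem h
  simp only [map_mul, map_inv, mul_inv_eq_one] at this
  simp only [← map_mul]
  exact congrArg artQ this

theorem star_Q : latQ (u 0) * latQ (u 1) * latQ (u 2) =
    (artQ (PresentedGroup.of 0) * artQ (PresentedGroup.of 1) * artQ (PresentedGroup.of 2) *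
      artQ (PresentedGroup.of 3)) ^ 3 := by
  simp only [← map_mul, ← map_pow]
  change latQ _ = artQ Δ
  symm
  refine (QuotientGroup.eq (s := N)).mpr ?_
  refine Subgroup.subset_normalClosure ?_
  rw [Set.mem_singleton_iff]
  exact Prod.ext (by simp) (by simp)

/-- The values of the forward map on the ten generators. -/
def fwdGen : Fin 10 → (AD4 × Multiplicative (Fin 3 → ℤ)) ⧸ N :=
  genMap (artQ (PresentedGroup.of 0)) (artQ (PresentedGroup.of 1))
    (artQ (PresentedGroup.of 2)) (artQ (PresentedGroup.of 3)) (latQ (u 0)) (latQ (u 1)) (latQ (u 2))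

theorem fwdGen_rels : ∀ r ∈ G130rels, FreeGroup.lift fwdGen r = 1 := by
  refine genMap_rels _ _ _ _ _ _ _ ((a_comm 0 1 ?_).map artQ) ((a_comm 0 2 ?_).map artQ)
    ((a_comm 1 2 ?_).map artQ) (a_braid 0 3 ?_) (a_braid 1 3 ?_) (a_braid 2 3 ?_)
    (latQ_comm _) (latQ_comm _) (latQ_comm _) star_Q <;>
  simp only [AD4rels, Set.mem_insert_iff, Set.mem_singleton_iff, true_or, or_true]

/-- The homomorphism from `G130` to the quotient. -/
def fwd : G130 →* (AD4 × Multiplicative (Fin 3 → ℤ)) ⧸ N :=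
  PresentedGroup.toGroup fwdGen_rels

theorem fwd_of (i : Fin 10) : fwd (PresentedGroup.of i) = fwdGen i :=
  PresentedGroup.toGroup.of _

theorem bwd_artQ (i : Fin 4) : bwd (artQ (PresentedGroup.of i)) =
    (![PresentedGroup.of 1, PresentedGroup.of 2, PresentedGroup.of 3, PresentedGroup.of 0] :
      Fin 4 → G130) i := prodHom_art i

theorem bwd_u0 : bwd (latQ (u 0)) = PresentedGroup.of 4 := prodHom_u0

theorem bwd_u1 : bwd (latQ (u 1)) = PresentedGroup.of 8 := prodHom_u1

theorem bwd_u2 : bwd (latQ (u 2)) = PresentedGroup.of 7 := prodHom_u2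

theorem bwd_fwd : bwd.comp fwd = MonoidHom.id G130 := by
  refine PresentedGroup.ext fun i => ?_
  rw [MonoidHom.comp_apply, fwd_of, MonoidHom.id_apply]
  fin_cases i
  · exact bwd_artQ 3
  · exact bwd_artQ 0
  · exact bwd_artQ 1
  · exact bwd_artQ 2
  · exact bwd_u0
  · change bwd ((latQ (u 0))⁻¹ * (artQ (PresentedGroup.of 0) * artQ (PresentedGroup.of 1) *
      artQ (PresentedGroup.of 3)) ^ 4) = PresentedGroup.of 5
    simp only [map_mul, map_inv, map_pow, bwd_u0, bwd_artQ]
    exact inv_mul_eq_of_eq_mul star12.symm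
  · change bwd ((latQ (u 2))⁻¹ * (artQ (PresentedGroup.of 0) * artQ (PresentedGroup.of 2) *
      artQ (PresentedGroup.of 3)) ^ 4) = PresentedGroup.of 6
    simp only [map_mul, map_inv, map_pow, bwd_u2, bwd_artQ]
    exact inv_mul_eq_of_eq_mul
      (star13.symm.trans (Subgroup.mem_center_iff.mp c31_central (PresentedGroup.of 6)))
  · exact bwd_u2
  · exact bwd_u1
  · change bwd ((latQ (u 1))⁻¹ * (artQ (PresentedGroup.of 1) * artQ (PresentedGroup.of 2) *
      artQ (PresentedGroup.of 3)) ^ 4) = PresentedGroup.of 9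
    simp only [map_mul, map_inv, map_pow, bwd_u1, bwd_artQ]
    exact inv_mul_eq_of_eq_mul star23.symm

theorem fwd_bwd_art : (fwd.comp bwd).comp artQ = artQ := by
  refine PresentedGroup.ext fun i => ?_
  rw [MonoidHom.comp_apply, MonoidHom.comp_apply, bwd_artQ]
  fin_cases i
  · exact fwd_of 1
  · exact fwd_of 2
  · exact fwd_of 3
  · exact fwd_of 0

theorem fwd_bwd_lat (n : Multiplicative (Fin 3 → ℤ)) : fwd (bwd (latQ n)) = latQ n := by
  rw [z_decomp n]
  simp only [map_mul, map_zpow, bwd_u0, bwd_u1, bwd_u2, fwd_of]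
  rfl

theorem fwd_bwd : fwd.comp bwd = MonoidHom.id _ := by
  refine MonoidHom.ext fun x => ?_
  obtain ⟨⟨m, k⟩, rfl⟩ := QuotientGroup.mk'_surjective N x
  have h : QuotientGroup.mk' N (m, k) = artQ m * latQ k := by
    change _ = QuotientGroup.mk' N (m, 1) * QuotientGroup.mk' N (1, k)
    rw [← map_mul, Prod.mk_mul_mk, mul_one, one_mul]
  rw [h, map_mul]
  have h1 : (fwd.comp bwd) (artQ m) = artQ m := DFunLike.congr_fun fwd_bwd_art m
  have h2 : (fwd.comp bwd) (latQ k) = latQ k := fwd_bwd_lat k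
  rw [h1, h2, MonoidHom.id_apply]

end forward

/-- Proposition 8: `PMod(1,3,0)` is isomorphic to `(A(D₄) × ℤ³)` modulo the single star
relation `c12 c23 c31 = (a1 a2 a3 b)^3`, with `a1, a2, a3, b` corresponding to the generators
of `A(D₄)` and `c12, c23, c31` to the standard basis `u₁, u₂, u₃` of `ℤ³`. -/
theorem stmt_6 :
    ∃ e : G130 ≃* (AD4 × Multiplicative (Fin 3 → ℤ)) ⧸ N,
      e (PresentedGroup.of 1) = QuotientGroup.mk' N (PresentedGroup.of 0, 1) ∧
      e (PresentedGroup.of 2) = QuotientGroup.mk' N (PresentedGroup.of 1, 1) ∧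
      e (PresentedGroup.of 3) = QuotientGroup.mk' N (PresentedGroup.of 2, 1) ∧
      e (PresentedGroup.of 0) = QuotientGroup.mk' N (PresentedGroup.of 3, 1) ∧
      e (PresentedGroup.of 4) = QuotientGroup.mk' N (1, u 0) ∧
      e (PresentedGroup.of 8) = QuotientGroup.mk' N (1, u 1) ∧
      e (PresentedGroup.of 7) = QuotientGroup.mk' N (1, u 2) := by
  exact ⟨MonoidHom.toMulEquiv fwd bwd bwd_fwd fwd_bwd, fwd_of 1, fwd_of 2, fwd_of 3, fwd_of 0,
    fwd_of 4, fwd_of 8, fwd_of 7⟩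
end

section
/- The group homomorphism from A(D4) to G₁₃₀ sending the generators a1, a2, a3, b of A(D4) to the like-named generators of G₁₃₀ (which is well defined since the defining relations of A(D4) hold among these elements of G₁₃₀) is injective; in particular a1, a2, a3, b generate a subgroup of G₁₃₀ isomorphic to A(D4). -/
theorem d4_x {G : Type*} [Group G] (x y z b : G)
    (xy : ∀ k, x * (y * k) = y * (x * k)) (xz : ∀ k, x * (z * k) = z * (x * k))
    (yz : ∀ k, y * (z * k) = z * (y * k)) (xb : ∀ k, x * (b * (x * k)) = b * (x * (b * k)))
    (yb : ∀ k, y * (b * (y * k)) = b * (y * (b * k)))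
    (zb : ∀ k, z * (b * (z * k)) = b * (z * (b * k))) (k : G) :
    x * (x * (y * (z * (b * (x * (y * (z * (b * (x * (y * (z * (b * k)))))))))))) = x * (y * (z * (b * (x * (y * (z * (b * (x * (y * (z * (b * (x * k)))))))))))) := by
  rw [xy (z * (b * (x * (y * (z * (b * (x * (y * (z * (b * k)))))))))),
    xz (b * (x * (y * (z * (b * (x * (y * (z * (b * k))))))))),
    yz (b * (x * (y * (z * (b * k))))),
    xy (z * (b * k)),
    xz (b * k),
    xb (z * (y * (b * (y * (z * (x * (b * k))))))),
    yb (z * (x * (b * k))),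
    ← zb (y * (b * (z * (x * (b * k))))),
    ← yz (b * (z * (x * (b * k)))),
    zb (x * (b * k)),
    ← yb (z * (b * (x * (b * k)))),
    ← yz (b * (y * (z * (b * (x * (b * k)))))),
    ← xb k,
    ← xz (b * (x * k)),
    ← xy (z * (b * (x * k)))]

theorem d4_y {G : Type*} [Group G] (x y z b : G)
    (xy : ∀ k, x * (y * k) = y * (x * k)) (xz : ∀ k, x * (z * k) = z * (x * k))
    (yz : ∀ k, y * (z * k) = z * (y * k)) (xb : ∀ k, x * (b * (x * k)) = b * (x * (b * k)))
    (yb : ∀ k, y * (b * (y * k)) = b * (y * (b * k)))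
    (zb : ∀ k, z * (b * (z * k)) = b * (z * (b * k))) (k : G) :
    y * (x * (y * (z * (b * (x * (y * (z * (b * (x * (y * (z * (b * k)))))))))))) = x * (y * (z * (b * (x * (y * (z * (b * (x * (y * (z * (b * (y * k)))))))))))) := by
  rw [← xy (y * (z * (b * (x * (y * (z * (b * (x * (y * (z * (b * k))))))))))),
    yz (b * (x * (y * (z * (b * (x * (y * (z * (b * k))))))))),
    xy (z * (b * (x * (y * (z * (b * k)))))),
    xz (b * (x * (y * (z * (b * k))))),
    yz (b * k),
    yb (z * (x * (b * (x * (z * (y * (b * k))))))),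
    xb (z * (y * (b * k))),
    ← zb (x * (b * (z * (y * (b * k))))),
    ← xz (b * (z * (y * (b * k)))),
    zb (y * (b * k)),
    ← xb (z * (b * (y * (b * k)))),
    ← xz (b * (x * (z * (b * (y * (b * k)))))),
    ← xy (z * (b * (x * (z * (b * (y * (b * k))))))),
    ← yb k,
    ← yz (b * (y * k))]

theorem d4_z {G : Type*} [Group G] (x y z b : G)
    (xy : ∀ k, x * (y * k) = y * (x * k)) (xz : ∀ k, x * (z * k) = z * (x * k))
    (yz : ∀ k, y * (z * k) = z * (y * k)) (xb : ∀ k, x * (b * (x * k)) = b * (x * (b * k)))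
    (yb : ∀ k, y * (b * (y * k)) = b * (y * (b * k)))
    (zb : ∀ k, z * (b * (z * k)) = b * (z * (b * k))) (k : G) :
    z * (x * (y * (z * (b * (x * (y * (z * (b * (x * (y * (z * (b * k)))))))))))) = x * (y * (z * (b * (x * (y * (z * (b * (x * (y * (z * (b * (z * k)))))))))))) := by
  rw [← xz (y * (z * (b * (x * (y * (z * (b * (x * (y * (z * (b * k))))))))))),
    ← yz (z * (b * (x * (y * (z * (b * (x * (y * (z * (b * k)))))))))),
    xy (z * (b * (x * (y * (z * (b * k)))))),
    xz (b * (x * (y * (z * (b * k))))),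
    yz (x * (b * (x * (y * (z * (b * k)))))),
    zb (y * (x * (b * (x * (y * (z * (b * k))))))),
    xb (y * (z * (b * k))),
    ← yb (x * (b * (y * (z * (b * k))))),
    ← yz (b * (y * (x * (b * (y * (z * (b * k))))))),
    ← xy (b * (y * (z * (b * k)))),
    yb (z * (b * k)),
    ← xb (y * (b * (z * (b * k)))),
    ← xz (b * (x * (y * (b * (z * (b * k)))))),
    ← xy (z * (b * (x * (y * (b * (z * (b * k))))))),
    ← zb k]

theorem d4_b {G : Type*} [Group G] (x y z b : G)
    (xy : ∀ k, x * (y * k) = y * (x * k)) (xz : ∀ k, x * (z * k) = z * (x * k))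
    (yz : ∀ k, y * (z * k) = z * (y * k)) (xb : ∀ k, x * (b * (x * k)) = b * (x * (b * k)))
    (yb : ∀ k, y * (b * (y * k)) = b * (y * (b * k)))
    (zb : ∀ k, z * (b * (z * k)) = b * (z * (b * k))) (k : G) :
    b * (x * (y * (z * (b * (x * (y * (z * (b * (x * (y * (z * (b * k)))))))))))) = x * (y * (z * (b * (x * (y * (z * (b * (x * (y * (z * (b * (b * k)))))))))))) := by
  rw [xy (z * (b * (x * (y * (z * (b * k)))))),
    xz (b * (x * (y * (z * (b * k))))),
    yz (x * (b * (x * (y * (z * (b * k)))))),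
    zb (y * (x * (b * (x * (y * (z * (b * k))))))),
    xb (y * (z * (b * k))),
    ← yb (x * (b * (y * (z * (b * k))))),
    ← yz (b * (y * (x * (b * (y * (z * (b * k))))))),
    ← xy (b * (y * (z * (b * k)))),
    yb (z * (b * (x * (y * (b * (y * (z * (b * k)))))))),
    ← xb (y * (b * (z * (b * (x * (y * (b * (y * (z * (b * k)))))))))),
    xy (b * (z * (b * (x * (y * (b * (y * (z * (b * k))))))))),
    ← zb (x * (y * (b * (y * (z * (b * k)))))),
    xz (b * (z * (x * (y * (b * (y * (z * (b * k)))))))),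
    ← xz (y * (b * (y * (z * (b * k))))),
    xb (z * (y * (b * (y * (z * (b * k)))))),
    yb (z * (b * k)),
    ← zb (y * (b * (z * (b * k)))),
    xz (b * (z * (y * (b * (z * (b * k)))))),
    ← yz (b * (z * (b * k))),
    zb (x * (b * (y * (z * (b * (z * (b * k))))))),
    ← yb (z * (b * (x * (b * (y * (z * (b * (z * (b * k))))))))),
    yz (b * (x * (b * (y * (z * (b * (z * (b * k)))))))),
    zb (b * k),
    ← yb (z * (b * (b * k))),
    xy (b * (y * (z * (b * (b * k))))),
    yb (x * (b * (y * (z * (b * (b * k)))))),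
    ← zb (y * (b * (x * (b * (y * (z * (b * (b * k)))))))),
    ← yz (b * (x * (b * (y * (z * (b * (b * k))))))),
    ← xb (y * (z * (b * (b * k)))),
    ← xz (b * (x * (y * (z * (b * (b * k)))))),
    ← xy (z * (b * (x * (y * (z * (b * (b * k)))))))]

theorem a3_x {G : Type*} [Group G] (x y b : G)
    (xy : ∀ k, x * (y * k) = y * (x * k)) (xb : ∀ k, x * (b * (x * k)) = b * (x * (b * k)))
    (yb : ∀ k, y * (b * (y * k)) = b * (y * (b * k))) (k : G) :
    x * (x * (y * (b * (x * (y * (b * k)))))) = x * (y * (b * (x * (y * (b * (y * k)))))) := by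
  rw [xy (b * (x * (y * (b * k)))),
    xb (y * (b * k)),
    ← yb k]

theorem a3_b {G : Type*} [Group G] (x y b : G)
    (xy : ∀ k, x * (y * k) = y * (x * k)) (xb : ∀ k, x * (b * (x * k)) = b * (x * (b * k)))
    (yb : ∀ k, y * (b * (y * k)) = b * (y * (b * k))) (k : G) :
    b * (x * (y * (b * (x * (y * (b * k)))))) = x * (y * (b * (x * (y * (b * (b * k)))))) := by
  rw [xy (b * (x * (y * (b * k)))),
    xb (y * (b * k)),
    ← yb (x * (b * (y * (b * k)))),
    ← xy (b * (y * (b * k))),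
    yb (b * k),
    ← xb (y * (b * (b * k))),
    ← xy (b * (x * (y * (b * (b * k)))))]

theorem a3_y {G : Type*} [Group G] (x y b : G)
    (xy : ∀ k, x * (y * k) = y * (x * k)) (xb : ∀ k, x * (b * (x * k)) = b * (x * (b * k)))
    (yb : ∀ k, y * (b * (y * k)) = b * (y * (b * k))) (k : G) :
    y * (x * (y * (b * (x * (y * (b * k)))))) = x * (y * (b * (x * (y * (b * (x * k)))))) := by
  rw [← xy (y * (b * (x * (y * (b * k))))),
    xy (b * k),
    yb (x * (b * k)),
    ← xb k,
    ← xy (b * (x * k))]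

theorem d4_central {G : Type*} [Group G] (x y z b : G)
    (xy : x * y = y * x) (xz : x * z = z * x) (yz : y * z = z * y)
    (xb : x * b * x = b * x * b) (yb : y * b * y = b * y * b) (zb : z * b * z = b * z * b) :
    Commute x ((x * y * z * b) ^ 3) ∧ Commute y ((x * y * z * b) ^ 3) ∧
    Commute z ((x * y * z * b) ^ 3) ∧ Commute b ((x * y * z * b) ^ 3) := by
  have c : ∀ u v : G, u * v = v * u → ∀ k, u * (v * k) = v * (u * k) := by
    intro u v h k
    rw [← mul_assoc, h, mul_assoc]
  have r : ∀ u v : G, u * v * u = v * u * v → ∀ k, u * (v * (u * k)) = v * (u * (v * k)) := by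
    intro u v h k
    rw [← mul_assoc, ← mul_assoc, h, mul_assoc, mul_assoc]
  have h1 := d4_x x y z b (c _ _ xy) (c _ _ xz) (c _ _ yz) (r _ _ xb) (r _ _ yb) (r _ _ zb) 1
  have h2 := d4_y x y z b (c _ _ xy) (c _ _ xz) (c _ _ yz) (r _ _ xb) (r _ _ yb) (r _ _ zb) 1
  have h3 := d4_z x y z b (c _ _ xy) (c _ _ xz) (c _ _ yz) (r _ _ xb) (r _ _ yb) (r _ _ zb) 1
  have h4 := d4_b x y z b (c _ _ xy) (c _ _ xz) (c _ _ yz) (r _ _ xb) (r _ _ yb) (r _ _ zb) 1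
  simp only [mul_one] at h1 h2 h3 h4
  simp only [Commute, SemiconjBy, pow_succ, pow_zero, one_mul, mul_assoc]
  exact ⟨h1, h2, h3, h4⟩

theorem a3_central {G : Type*} [Group G] (x y b : G)
    (xy : x * y = y * x) (xb : x * b * x = b * x * b) (yb : y * b * y = b * y * b) :
    Commute x ((x * y * b) ^ 4) ∧ Commute y ((x * y * b) ^ 4) ∧
    Commute b ((x * y * b) ^ 4) := by
  have c : ∀ u v : G, u * v = v * u → ∀ k, u * (v * k) = v * (u * k) := by
    intro u v h k
    rw [← mul_assoc, h, mul_assoc]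
  have r : ∀ u v : G, u * v * u = v * u * v → ∀ k, u * (v * (u * k)) = v * (u * (v * k)) := by
    intro u v h k
    rw [← mul_assoc, ← mul_assoc, h, mul_assoc, mul_assoc]
  have h1 := a3_x x y b (c _ _ xy) (r _ _ xb) (r _ _ yb) 1
  have h2 := a3_y x y b (c _ _ xy) (r _ _ xb) (r _ _ yb) 1
  have h3 := a3_b x y b (c _ _ xy) (r _ _ xb) (r _ _ yb) 1
  have e : (x * y * b) ^ 4 = (x * y * b) ^ 2 * (x * y * b) ^ 2 := by rw [← pow_add]
  have k1 : SemiconjBy ((x * y * b) ^ 2) y x := by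
    simp only [mul_one] at h1
    simp only [SemiconjBy, pow_succ, pow_zero, one_mul, mul_assoc]
    exact h1.symm
  have k2 : SemiconjBy ((x * y * b) ^ 2) x y := by
    simp only [mul_one] at h2
    simp only [SemiconjBy, pow_succ, pow_zero, one_mul, mul_assoc]
    exact h2.symm
  have k3 : SemiconjBy ((x * y * b) ^ 2) b b := by
    simp only [mul_one] at h3
    simp only [SemiconjBy, pow_succ, pow_zero, one_mul, mul_assoc]
    exact h3.symm
  rw [e]
  exact ⟨(k1.mul_left k2).symm, (k2.mul_left k1).symm, (k3.mul_left k3).symm⟩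

theorem rel_eq {α : Type*} {rels : Set (FreeGroup α)} {u v : FreeGroup α}
    (h : u * v⁻¹ ∈ rels) : PresentedGroup.mk rels u = PresentedGroup.mk rels v := by
  have := PresentedGroup.one_of_mem h
  rwa [map_mul, map_inv, mul_inv_eq_one] at this

/-- images of the generators of `A(D₄)` -/
def fgen : Fin 4 → G130 :=
  ![PresentedGroup.of 1, PresentedGroup.of 2, PresentedGroup.of 3, PresentedGroup.of 0]

theorem fgen_rel : ∀ r ∈ AD4rels, FreeGroup.lift fgen r = 1 := by
  have e0 : ∀ i j : Fin 10, G130aux.comm (G130aux.g i) (G130aux.g j) ∈ G130rels →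
      (PresentedGroup.of i * PresentedGroup.of j : G130) =
      PresentedGroup.of j * PresentedGroup.of i := fun i j h => rel_eq h
  have e1 := e0 1 2 (by repeat (first | exact Or.inl (by with_reducible rfl) | apply Or.inr))
  have e2 := e0 1 3 (by repeat (first | exact Or.inl (by with_reducible rfl) | apply Or.inr))
  have e3 := e0 2 3 (by repeat (first | exact Or.inl (by with_reducible rfl) | apply Or.inr))
  have e4 : ∀ i : Fin 10, G130aux.braid (G130aux.g i) (G130aux.g 0) ∈ G130rels →
      (PresentedGroup.of i * PresentedGroup.of 0 * PresentedGroup.of i : G130) =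
      PresentedGroup.of 0 * PresentedGroup.of i * PresentedGroup.of 0 := fun i h => rel_eq h
  have b1 := e4 1 (by repeat (first | exact Or.inl (by with_reducible rfl) | apply Or.inr))
  have b2 := e4 2 (by repeat (first | exact Or.inl (by with_reducible rfl) | apply Or.inr))
  have b3 := e4 3 (by repeat (first | exact Or.inl (by with_reducible rfl) | apply Or.inr))
  rintro r (rfl | rfl | rfl | rfl | rfl | rfl) <;>
    rw [map_mul, map_inv, mul_inv_eq_one] <;>
    simp only [map_mul, FreeGroup.lift_apply_of]
  exacts [e1, e2, e3, b1, b2, b3]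

/-- The retraction on generators. -/
def rgen : Fin 10 → AD4 :=
  let x : AD4 := PresentedGroup.of 0
  let y : AD4 := PresentedGroup.of 1
  let z : AD4 := PresentedGroup.of 2
  let b : AD4 := PresentedGroup.of 3
  ![b, x, y, z, (x * y * z * b) ^ 3, ((x * y * z * b) ^ 3)⁻¹ * (x * y * b) ^ 4,
    (x * z * b) ^ 4, 1, 1, (y * z * b) ^ 4]

theorem rgen_rel : ∀ r ∈ G130rels, FreeGroup.lift rgen r = 1 := by
  obtain ⟨x, hx⟩ : ∃ x : AD4, x = PresentedGroup.of 0 := ⟨_, rfl⟩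
  obtain ⟨y, hy⟩ : ∃ x : AD4, x = PresentedGroup.of 1 := ⟨_, rfl⟩
  obtain ⟨z, hz⟩ : ∃ x : AD4, x = PresentedGroup.of 2 := ⟨_, rfl⟩
  obtain ⟨b, hb⟩ : ∃ x : AD4, x = PresentedGroup.of 3 := ⟨_, rfl⟩
  have xy : x * y = y * x := by
    subst hx hy
    exact rel_eq (rels := AD4rels) (u := FreeGroup.of 0 * FreeGroup.of 1)
      (v := FreeGroup.of 1 * FreeGroup.of 0) (by simp [AD4rels])
  have xz : x * z = z * x := by
    subst hx hz
    exact rel_eq (rels := AD4rels) (u := FreeGroup.of 0 * FreeGroup.of 2)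
      (v := FreeGroup.of 2 * FreeGroup.of 0) (by simp [AD4rels])
  have yz : y * z = z * y := by
    subst hy hz
    exact rel_eq (rels := AD4rels) (u := FreeGroup.of 1 * FreeGroup.of 2)
      (v := FreeGroup.of 2 * FreeGroup.of 1) (by simp [AD4rels])
  have xb : x * b * x = b * x * b := by
    subst hx hb
    exact rel_eq (rels := AD4rels) (u := FreeGroup.of 0 * FreeGroup.of 3 * FreeGroup.of 0)
      (v := FreeGroup.of 3 * FreeGroup.of 0 * FreeGroup.of 3) (by simp [AD4rels])
  have yb : y * b * y = b * y * b := by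
    subst hy hb
    exact rel_eq (rels := AD4rels) (u := FreeGroup.of 1 * FreeGroup.of 3 * FreeGroup.of 1)
      (v := FreeGroup.of 3 * FreeGroup.of 1 * FreeGroup.of 3) (by simp [AD4rels])
  have zb : z * b * z = b * z * b := by
    subst hz hb
    exact rel_eq (rels := AD4rels) (u := FreeGroup.of 2 * FreeGroup.of 3 * FreeGroup.of 2)
      (v := FreeGroup.of 3 * FreeGroup.of 2 * FreeGroup.of 3) (by simp [AD4rels])
  obtain ⟨dx, dy, dz, db⟩ := d4_central x y z b xy xz yz xb yb zb
  obtain ⟨px, py, pb⟩ := a3_central x y b xy xb yb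
  obtain ⟨qx, qz, qb⟩ := a3_central x z b xz xb zb
  obtain ⟨sy, sz, sb⟩ := a3_central y z b yz yb zb
  have r0 : rgen 0 = b := hb.symm
  have r1 : rgen 1 = x := hx.symm
  have r2 : rgen 2 = y := hy.symm
  have r3 : rgen 3 = z := hz.symm
  have r4 : rgen 4 = (x * y * z * b) ^ 3 := by subst hx hy hz hb; rfl
  have r5 : rgen 5 = ((x * y * z * b) ^ 3)⁻¹ * (x * y * b) ^ 4 := by subst hx hy hz hb; rfl
  have r6 : rgen 6 = (x * z * b) ^ 4 := by subst hx hz hb; rfl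
  have r7 : rgen 7 = 1 := rfl
  have r8 : rgen 8 = 1 := rfl
  have r9 : rgen 9 = (y * z * b) ^ 4 := by subst hy hz hb; rfl
  generalize hD : (x * y * z * b) ^ 3 = D at *
  have dp : Commute ((x * y * b) ^ 4) D := ((dx.mul_left dy).mul_left db).pow_left 4
  have dq : Commute ((x * z * b) ^ 4) D := ((dx.mul_left dz).mul_left db).pow_left 4
  have ds : Commute ((y * z * b) ^ 4) D := ((dy.mul_left dz).mul_left db).pow_left 4
  generalize hP : (x * y * b) ^ 4 = P at *
  generalize hQ : (x * z * b) ^ 4 = Q at *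
  generalize hS : (y * z * b) ^ 4 = S at *
  have t1 : x * (D⁻¹ * P) = D⁻¹ * P * x := dx.inv_right.mul_right px
  have t2 : y * (D⁻¹ * P) = D⁻¹ * P * y := dy.inv_right.mul_right py
  have t3 : b * (D⁻¹ * P) = D⁻¹ * P * b := db.inv_right.mul_right pb
  have t4 : D * (D⁻¹ * P) = D⁻¹ * P * D :=
    ((Commute.refl D).inv_right).mul_right dp.symm
  intro r hr
  simp only [G130rels, Set.mem_insert_iff, Set.mem_singleton_iff] at hr
  rcases hr with rfl | rfl | rfl | rfl | rfl | rfl | rfl | rfl | rfl | rfl | rfl | rfl | rfl |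
    rfl | rfl | rfl | rfl | rfl | rfl | rfl | rfl | rfl | rfl | rfl | rfl | rfl | rfl | rfl |
    rfl | rfl | rfl | rfl | rfl | rfl | rfl | rfl | rfl | rfl | rfl | rfl | rfl | rfl | rfl <;>
  (try simp only [G130aux.comm, G130aux.braid]) <;>
  rw [map_mul, map_inv, mul_inv_eq_one] <;>
  simp only [map_mul, map_pow, G130aux.g, FreeGroup.lift_apply_of, r0, r1, r2, r3, r4, r5, r6,
    r7, r8, r9, mul_one, one_mul, hD, hP, hQ, hS, mul_inv_cancel_left] <;>
  first
  | assumption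
  | exact dx.eq
  | exact dy.eq
  | exact dz.eq
  | exact db.eq
  | exact qx.eq
  | exact qz.eq
  | exact qb.eq
  | exact sy.eq
  | exact sz.eq
  | exact sb.eq
  | exact dq.symm.eq
  | exact ds.symm.eq
  | (rw [← t4, mul_inv_cancel_left])

/-- Proposition 8 (first part): the homomorphism `A(D₄) → PMod(1,3,0)` sending the
generators `a1, a2, a3, b` of `A(D₄)` to the like-named generators of the Gervais
presentation is injective, i.e. `a1, a2, a3, b` generate a copy of `A(D₄)` in `PMod(1,3,0)`. -/
theorem stmt_7 :
    ∃ f : AD4 →* G130,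
      f (PresentedGroup.of 0) = PresentedGroup.of 1 ∧
      f (PresentedGroup.of 1) = PresentedGroup.of 2 ∧
      f (PresentedGroup.of 2) = PresentedGroup.of 3 ∧
      f (PresentedGroup.of 3) = PresentedGroup.of 0 ∧
      Function.Injective f := by
  refine ⟨PresentedGroup.toGroup fgen_rel, PresentedGroup.toGroup.of _,
    PresentedGroup.toGroup.of _, PresentedGroup.toGroup.of _, PresentedGroup.toGroup.of _, ?_⟩
  have key : (PresentedGroup.toGroup rgen_rel).comp (PresentedGroup.toGroup fgen_rel) =
      MonoidHom.id AD4 := by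
    apply PresentedGroup.ext
    intro i
    rw [MonoidHom.comp_apply, PresentedGroup.toGroup.of]
    fin_cases i <;> exact PresentedGroup.toGroup.of _
  exact Function.LeftInverse.injective (fun a => DFunLike.congr_fun key a)
end

section
/- The group homomorphism from the free abelian group ℤ³ to G₁₃₀ sending the three standard basis elements to c12, c23, c31 (well defined since these three elements of G₁₃₀ pairwise commute) is injective; in particular c12, c23, c31 generate a free abelian subgroup of G₁₃₀ of rank 3. -/
namespace G130proof

/-- Images of the generators in `ℤ³`. -/
def img : Fin 10 → Multiplicative (Fin 3 → ℤ) := fun i => Multiplicative.ofAdd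
  ((![![1,1,1], ![1,1,1], ![1,1,1], ![1,1,1],
    ![12,0,0], ![0,12,12], ![12,12,0], ![0,0,12], ![0,12,0], ![12,0,12]] : Fin 10 → Fin 3 → ℤ) i)

theorem lift_comm (x y : FreeGroup (Fin 10)) :
    FreeGroup.lift img (G130aux.comm x y) = 1 := by
  simp only [G130aux.comm, map_mul, map_inv]
  rw [mul_comm (FreeGroup.lift img x), mul_inv_cancel]

theorem img_rels : ∀ r ∈ G130rels, FreeGroup.lift img r = 1 := by
  intro r hr
  simp only [G130rels, Set.mem_insert_iff, Set.mem_singleton_iff] at hr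
  rcases hr with h|h|h|h|h|h|h|h|h|h|h|h|h|h|h|h|h|h|h|h|h|h|h|h|h|h|h|h|h|h|h|h|h|h|h|h|h|h|h|h|h|h|h
  all_goals first
    | (rw [h]; exact lift_comm _ _)
    | (rw [h]
       simp only [G130aux.braid, G130aux.g, map_mul, map_inv, map_pow, FreeGroup.lift_apply_of]
       rw [mul_inv_eq_one]
       decide)

/-- The abelian quotient. -/
def toAb : G130 →* Multiplicative (Fin 3 → ℤ) := PresentedGroup.toGroup img_rels

theorem commute_of_rel {i j : Fin 10}
    (h : G130aux.comm (G130aux.g i) (G130aux.g j) ∈ G130rels) :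
    Commute (PresentedGroup.of i : G130) (PresentedGroup.of j) := by
  have h1 := PresentedGroup.one_of_mem h
  simp only [G130aux.comm, G130aux.g, map_mul, map_inv] at h1
  exact mul_inv_eq_one.mp h1

theorem c48 : Commute (PresentedGroup.of 4 : G130) (PresentedGroup.of 8) :=
  commute_of_rel (by simp [G130rels])
theorem c47 : Commute (PresentedGroup.of 4 : G130) (PresentedGroup.of 7) :=
  commute_of_rel (by simp [G130rels])
theorem c87 : Commute (PresentedGroup.of 8 : G130) (PresentedGroup.of 7) :=
  commute_of_rel (by simp [G130rels])

/-- The homomorphism `ℤ³ → G130`. -/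
def F : Multiplicative (Fin 3 → ℤ) →* G130 where
  toFun v := (PresentedGroup.of 4) ^ (v.toAdd 0) * (PresentedGroup.of 8) ^ (v.toAdd 1) *
    (PresentedGroup.of 7) ^ (v.toAdd 2)
  map_one' := by simp
  map_mul' v w := by
    simp only [toAdd_mul, Pi.add_apply, zpow_add]
    have h1 := (c48.zpow_zpow (w.toAdd 0) (v.toAdd 1))
    have h2 := (c47.zpow_zpow (w.toAdd 0) (v.toAdd 2))
    have h3 := (c87.zpow_zpow (w.toAdd 1) (v.toAdd 2))
    generalize (PresentedGroup.of 4 : G130) ^ (v.toAdd 0) = a at *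
    generalize (PresentedGroup.of 4 : G130) ^ (w.toAdd 0) = a2 at *
    generalize (PresentedGroup.of 8 : G130) ^ (v.toAdd 1) = b at *
    generalize (PresentedGroup.of 8 : G130) ^ (w.toAdd 1) = b2 at *
    generalize (PresentedGroup.of 7 : G130) ^ (v.toAdd 2) = c at *
    generalize (PresentedGroup.of 7 : G130) ^ (w.toAdd 2) = c2 at *
    calc a * a2 * (b * b2) * (c * c2) = a * (a2 * b) * (b2 * c) * c2 := by simp only [mul_assoc]
      _ = a * b * (a2 * c) * b2 * c2 := by rw [h1.eq, h3.eq]; simp only [mul_assoc]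
      _ = a * b * c * (a2 * b2 * c2) := by rw [h2.eq]; simp only [mul_assoc]

theorem toAb_F (v : Multiplicative (Fin 3 → ℤ)) : toAb (F v) = v ^ 12 := by
  have h : ∀ i, toAb (PresentedGroup.of i) = img i := fun i => PresentedGroup.toGroup.of _
  simp only [F, MonoidHom.coe_mk, OneHom.coe_mk, map_mul, map_zpow, h]
  apply Multiplicative.toAdd.injective
  funext i
  fin_cases i <;> simp [img] <;> ring

end G130proof

/-- Proposition 8 (second part): the homomorphism `ℤ³ → PMod(1,3,0)` sending the standard
basis elements to `c12, c23, c31` is injective, i.e. `c12, c23, c31` generate a free abelian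
subgroup of rank 3. -/
theorem stmt_8 :
    ∃ f : Multiplicative (Fin 3 → ℤ) →* G130,
      f (u 0) = PresentedGroup.of 4 ∧
      f (u 1) = PresentedGroup.of 8 ∧
      f (u 2) = PresentedGroup.of 7 ∧
      Function.Injective f := by
  refine ⟨G130proof.F, ?_, ?_, ?_, ?_⟩
  · simp [G130proof.F, u]
  · simp [G130proof.F, u]
  · simp [G130proof.F, u]
  · intro v w h
    have h1 : v ^ 12 = w ^ 12 := by rw [← G130proof.toAb_F, h, G130proof.toAb_F]
    apply Multiplicative.toAdd.injective
    funext i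
    have h2 := congrFun (congrArg Multiplicative.toAdd h1) i
    simp only [toAdd_pow, Pi.smul_apply, nsmul_eq_mul] at h2
    push_cast at h2
    linarith
end

section
/- The group G₁₂₀ is isomorphic to the direct product B4 × ℤ, where the generators a1, b, a2 of G₁₂₀ correspond to σ1, σ2, σ3 respectively. -/
namespace G120aux
/-- Generators of the Gervais presentation of `PMod(1,2,0)`:
`b = of 0`, `a1 = of 1`, `a2 = of 2`, `c12 = of 3`, `c21 = of 4`. -/
def g (i : Fin 5) : FreeGroup (Fin 5) := FreeGroup.of i
/-- The relator expressing that `x` and `y` commute. -/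
def comm (x y : FreeGroup (Fin 5)) : FreeGroup (Fin 5) := x * y * (y * x)⁻¹
/-- The relator expressing the braid relation `x y x = y x y`. -/
def braid (x y : FreeGroup (Fin 5)) : FreeGroup (Fin 5) := x * y * x * (y * x * y)⁻¹
end G120aux

open G120aux in
/-- The relations of the Gervais presentation of `PMod(1,2,0)`. -/
def G120rels : Set (FreeGroup (Fin 5)) :=
  {comm (g 1) (g 2), braid (g 1) (g 0), braid (g 2) (g 0),
   comm (g 3) (g 1), comm (g 3) (g 2), comm (g 3) (g 0),
   comm (g 4) (g 1), comm (g 4) (g 2), comm (g 4) (g 0),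
   comm (g 3) (g 4),
   g 3 * g 4 * ((g 1 * g 0 * g 2) ^ 4)⁻¹}

/-- The Gervais presentation of the pure mapping class group `PMod(1,2,0)`. -/
abbrev G120 : Type := PresentedGroup G120rels

/-- The fourth power of `x y z` commutes with `x`, `y`, `z` when the braid relations hold. -/
theorem braid_full_twist {G : Type*} [Group G] (x y z : G) (h1 : x * y * x = y * x * y)
    (h2 : y * z * y = z * y * z) (h3 : x * z = z * x) :
    Commute ((x * y * z) ^ 4) x ∧ Commute ((x * y * z) ^ 4) y ∧
      Commute ((x * y * z) ^ 4) z := by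
  have hx : (x * y * z) * x = y * (x * y * z) := by
    calc (x * y * z) * x = x * y * (z * x) := by group
      _ = (x * y * x) * z := by rw [← h3]; group
      _ = y * (x * y * z) := by rw [h1]; group
  have hy : (x * y * z) * y = z * (x * y * z) := by
    calc (x * y * z) * y = x * (y * z * y) := by group
      _ = (x * z) * y * z := by rw [h2]; group
      _ = z * (x * y * z) := by rw [h3]; group
  have hz : (x * y * z) * (x * y * z) * z = x * ((x * y * z) * (x * y * z)) := by
    calc (x * y * z) * (x * y * z) * z = x * y * (z * x) * y * z * z := by group
      _ = x * y * x * (z * y * z) * z := by rw [← h3]; group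
      _ = x * (y * x * y) * z * y * z := by rw [← h2]; group
      _ = x * x * y * (x * z) * y * z := by rw [← h1]; group
      _ = x * ((x * y * z) * (x * y * z)) := by rw [h3]; group
  generalize x * y * z = d at *
  have ey : y = d * x * d⁻¹ := by rw [hx]; group
  have ez : z = d * y * d⁻¹ := by rw [hy]; group
  have cd : Commute (d ^ 4) d := (Commute.refl d).pow_left 4
  have cx : Commute (d ^ 4) x := by
    change d ^ 4 * x = x * d ^ 4
    calc d ^ 4 * x = d * d * d * (d * x) := by simp only [pow_succ, pow_zero, one_mul, mul_assoc]
      _ = d * d * (d * y) * d := by rw [hx]; group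
      _ = (d * d * z) * d * d := by rw [hy]; group
      _ = x * d ^ 4 := by rw [hz]; simp only [pow_succ, pow_zero, one_mul, mul_assoc]
  have cy : Commute (d ^ 4) y := by
    rw [ey]; exact (cd.mul_right cx).mul_right cd.inv_right
  have cz : Commute (d ^ 4) z := by
    rw [ez]; exact (cd.mul_right cy).mul_right cd.inv_right
  exact ⟨cx, cy, cz⟩

namespace G120aux

theorem B4_rel {r s : FreeGroup (Fin 3)} (h : r * s⁻¹ ∈ B4rels) :
    PresentedGroup.mk B4rels r = PresentedGroup.mk B4rels s := by
  have := (PresentedGroup.one_of_mem h)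
  rwa [map_mul, map_inv, mul_inv_eq_one] at this

theorem G120_rel {r s : FreeGroup (Fin 5)} (h : r * s⁻¹ ∈ G120rels) :
    PresentedGroup.mk G120rels r = PresentedGroup.mk G120rels s := by
  have := (PresentedGroup.one_of_mem h)
  rwa [map_mul, map_inv, mul_inv_eq_one] at this

/-- Generators of `B4`. -/
def s (i : Fin 3) : B4 := PresentedGroup.of i
/-- Generators of `G120`. -/
def q (i : Fin 5) : G120 := PresentedGroup.of i

theorem s01 : s 0 * s 1 * s 0 = s 1 * s 0 * s 1 :=
  B4_rel (r := FreeGroup.of 0 * FreeGroup.of 1 * FreeGroup.of 0) (s := FreeGroup.of 1 * FreeGroup.of 0 * FreeGroup.of 1) (by simp [B4rels])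
theorem s12 : s 1 * s 2 * s 1 = s 2 * s 1 * s 2 :=
  B4_rel (r := FreeGroup.of 1 * FreeGroup.of 2 * FreeGroup.of 1) (s := FreeGroup.of 2 * FreeGroup.of 1 * FreeGroup.of 2) (by simp [B4rels])
theorem s02 : s 0 * s 2 = s 2 * s 0 :=
  B4_rel (r := FreeGroup.of 0 * FreeGroup.of 2) (s := FreeGroup.of 2 * FreeGroup.of 0) (by simp [B4rels])

theorem q_comm {i j : Fin 5} (h : comm (g i) (g j) ∈ G120rels) : q i * q j = q j * q i :=
  G120_rel (r := FreeGroup.of i * FreeGroup.of j) (s := FreeGroup.of j * FreeGroup.of i) h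
theorem q_braid {i j : Fin 5} (h : braid (g i) (g j) ∈ G120rels) :
    q i * q j * q i = q j * q i * q j :=
  G120_rel (r := FreeGroup.of i * FreeGroup.of j * FreeGroup.of i) (s := FreeGroup.of j * FreeGroup.of i * FreeGroup.of j) h
theorem q_star : q 3 * q 4 = (q 1 * q 0 * q 2) ^ 4 :=
  G120_rel (r := FreeGroup.of 3 * FreeGroup.of 4) (s := (FreeGroup.of 1 * FreeGroup.of 0 * FreeGroup.of 2) ^ 4)
    (by simp only [G120rels, g, Set.mem_insert_iff, Set.mem_singleton_iff, or_true])

/-- Images of the generators of `G120`. -/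
def fwdGen : Fin 5 → B4 × Multiplicative ℤ :=
  ![(s 1, 1), (s 0, 1), (s 2, 1), (1, Multiplicative.ofAdd 1),
    ((s 0 * s 1 * s 2) ^ 4, Multiplicative.ofAdd (-1))]

theorem fwd_rels : ∀ r ∈ G120rels, FreeGroup.lift fwdGen r = 1 := by
  obtain ⟨h0, h1, h2⟩ := braid_full_twist (s 0) (s 1) (s 2) s01 s12 s02
  intro r hr
  simp only [G120rels, Set.mem_insert_iff, Set.mem_singleton_iff] at hr
  rcases hr with rfl | rfl | rfl | rfl | rfl | rfl | rfl | rfl | rfl | rfl | rfl <;>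
    simp only [comm, braid, g, map_mul, map_inv, map_pow, FreeGroup.lift_apply_of,
      mul_inv_eq_one] <;>
    refine Prod.ext ?_ ?_ <;> simp [fwdGen]
  · exact s02
  · exact s01
  · exact s12.symm
  · exact h0.eq
  · exact h2.eq
  · exact h1.eq

/-- The forward map. -/
def fwd : G120 →* B4 × Multiplicative ℤ := PresentedGroup.toGroup fwd_rels

theorem fwd_q (i : Fin 5) : fwd (q i) = fwdGen i := PresentedGroup.toGroup.of fwd_rels

theorem bwd_rels : ∀ r ∈ B4rels, FreeGroup.lift ![q 1, q 0, q 2] r = 1 := by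
  intro r hr
  simp only [B4rels, Set.mem_insert_iff, Set.mem_singleton_iff] at hr
  rcases hr with rfl | rfl | rfl <;>
    simp only [map_mul, map_inv, FreeGroup.lift_apply_of, mul_inv_eq_one]
  · exact q_braid (by simp [G120rels])
  · exact (q_braid (by simp [G120rels])).symm
  · exact q_comm (by simp [G120rels])

/-- The backward map on `B4`. -/
def bwd : B4 →* G120 := PresentedGroup.toGroup bwd_rels

theorem bwd_s (i : Fin 3) : bwd (s i) = ![q 1, q 0, q 2] i := PresentedGroup.toGroup.of bwd_rels

theorem bwd_comm (x : B4) : Commute (bwd x) (q 3) := by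
  have : bwd.range ≤ Subgroup.centralizer {q 3} := by
    rw [MonoidHom.range_eq_map, ← PresentedGroup.closure_range_of, MonoidHom.map_closure,
      Subgroup.closure_le]
    rintro _ ⟨_, ⟨i, rfl⟩, rfl⟩
    rw [SetLike.mem_coe, Subgroup.mem_centralizer_singleton_iff]
    change bwd (s i) * _ = _ * bwd (s i)
    rw [bwd_s]
    fin_cases i
    · exact (q_comm (by simp [G120rels])).symm
    · exact (q_comm (by simp [G120rels])).symm
    · exact (q_comm (by simp [G120rels])).symm
  exact Subgroup.mem_centralizer_singleton_iff.1 (this ⟨x, rfl⟩)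

/-- The inverse map. -/
def inv : B4 × Multiplicative ℤ →* G120 :=
  MonoidHom.noncommCoprod bwd (zpowersHom G120 (q 3))
    (fun x n => (bwd_comm x).zpow_right n.toAdd)

theorem inv_apply (x : B4) (n : ℤ) : inv (x, Multiplicative.ofAdd n) = bwd x * q 3 ^ n := rfl

theorem inv_one (x : B4) : inv (x, 1) = bwd x := by
  have := inv_apply x 0
  simpa using this

theorem inv_fwd : inv.comp fwd = MonoidHom.id G120 := by
  refine PresentedGroup.ext fun i => ?_
  change inv (fwd (q i)) = q i
  rw [fwd_q]
  fin_cases i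
  · exact (inv_one _).trans (bwd_s 1)
  · exact (inv_one _).trans (bwd_s 0)
  · exact (inv_one _).trans (bwd_s 2)
  · exact (inv_apply 1 1).trans (by simp)
  · refine (inv_apply _ (-1)).trans ?_
    have h : q 3 * q 4 = q 4 * q 3 := q_comm (by simp [G120rels])
    simp only [map_pow, map_mul, bwd_s]
    change (q 1 * q 0 * q 2) ^ 4 * _ = q 4
    rw [← q_star, h]; group

theorem fwd_inv : fwd.comp inv = MonoidHom.id _ := by
  have h1 : fwd.comp bwd = MonoidHom.inl B4 (Multiplicative ℤ) := by
    refine PresentedGroup.ext fun i => ?_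
    change fwd (bwd (s i)) = (s i, 1)
    rw [bwd_s]
    fin_cases i
    · exact fwd_q 1
    · exact fwd_q 0
    · exact fwd_q 2
  ext1 ⟨x, n⟩
  change fwd (bwd x * q 3 ^ n.toAdd) = (x, n)
  have hx : fwd (bwd x) = (x, 1) := DFunLike.congr_fun h1 x
  have h3 : fwd (q 3) = (1, Multiplicative.ofAdd 1) := fwd_q 3
  rw [map_mul, map_zpow, hx, h3]
  refine Prod.ext ?_ ?_
  · simp
  · simp [← ofAdd_zsmul]

end G120aux

/-- Proposition 10: `PMod(1,2,0)`, given by the Gervais presentation, is isomorphic to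
`B₄ × ℤ`, with the generators `a1, b, a2` corresponding to `σ1, σ2, σ3` respectively. -/
theorem stmt_9 :
    ∃ e : G120 ≃* B4 × Multiplicative ℤ,
      e (PresentedGroup.of 1) = (PresentedGroup.of 0, 1) ∧
      e (PresentedGroup.of 0) = (PresentedGroup.of 1, 1) ∧
      e (PresentedGroup.of 2) = (PresentedGroup.of 2, 1) := by
  exact ⟨MonoidHom.toMulEquiv G120aux.fwd G120aux.inv G120aux.inv_fwd G120aux.fwd_inv,
    G120aux.fwd_q 1, G120aux.fwd_q 0, G120aux.fwd_q 2⟩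
end

section
/- In B4, the subgroup generated by the two elements σ1^2*σ3 and σ2 is not isomorphic to the free group of rank 2, i.e., there is no group isomorphism between Subgroup.closure {σ1^2*σ3, σ2} and FreeGroup (Fin 2). -/
theorem braid_comm {G : Type*} [Group G] (a b c : G) (hab : a * b * a = b * a * b)
    (hbc : b * c * b = c * b * c) (hac : a * c = c * a) :
    b * (a ^ 2 * c * b) ^ 3 = (a ^ 2 * c * b) ^ 3 * b := by
  have key : b*a*a*c*b*a*a*c*b*a*a*c*b = a*a*c*b*a*a*c*b*a*a*c*b*b := by
    calc
      b*a*a*c*b*a*a*c*b*a*a*c*b = b*a*c*a*b*a*a*c*b*a*a*c*b := by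
        simpa only [mul_assoc, one_mul, mul_one] using congrArg (fun t => b*a * t * (b*a*a*c*b*a*a*c*b)) (hac)
      _ = b*a*c*b*a*b*a*c*b*a*a*c*b := by
        simpa only [mul_assoc, one_mul, mul_one] using congrArg (fun t => b*a*c * t * (a*c*b*a*a*c*b)) (hab)
      _ = b*c*a*b*a*b*a*c*b*a*a*c*b := by
        simpa only [mul_assoc, one_mul, mul_one] using congrArg (fun t => b * t * (b*a*b*a*c*b*a*a*c*b)) (hac)
      _ = b*c*b*a*b*b*a*c*b*a*a*c*b := by
        simpa only [mul_assoc, one_mul, mul_one] using congrArg (fun t => b*c * t * (b*a*c*b*a*a*c*b)) (hab)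
      _ = c*b*c*a*b*b*a*c*b*a*a*c*b := by
        simpa only [mul_assoc, one_mul, mul_one] using congrArg (fun t => 1 * t * (a*b*b*a*c*b*a*a*c*b)) (hbc)
      _ = c*b*c*a*b*b*c*a*b*a*a*c*b := by
        simpa only [mul_assoc, one_mul, mul_one] using congrArg (fun t => c*b*c*a*b*b * t * (b*a*a*c*b)) (hac)
      _ = c*b*c*a*b*b*c*b*a*b*a*c*b := by
        simpa only [mul_assoc, one_mul, mul_one] using congrArg (fun t => c*b*c*a*b*b*c * t * (a*c*b)) (hab)
      _ = c*b*c*a*b*b*c*b*b*a*b*c*b := by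
        simpa only [mul_assoc, one_mul, mul_one] using congrArg (fun t => c*b*c*a*b*b*c*b * t * (c*b)) (hab)
      _ = c*b*c*a*b*c*b*c*b*a*b*c*b := by
        simpa only [mul_assoc, one_mul, mul_one] using congrArg (fun t => c*b*c*a*b * t * (b*a*b*c*b)) (hbc)
      _ = c*b*c*a*b*c*c*b*c*a*b*c*b := by
        simpa only [mul_assoc, one_mul, mul_one] using congrArg (fun t => c*b*c*a*b*c * t * (a*b*c*b)) (hbc)
      _ = c*b*a*c*b*c*c*b*c*a*b*c*b := by
        simpa only [mul_assoc, one_mul, mul_one] using congrArg (fun t => c*b * t * (b*c*c*b*c*a*b*c*b)) (hac.symm)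
      _ = c*b*a*b*c*b*c*b*c*a*b*c*b := by
        simpa only [mul_assoc, one_mul, mul_one] using congrArg (fun t => c*b*a * t * (c*b*c*a*b*c*b)) (hbc.symm)
      _ = c*a*b*a*c*b*c*b*c*a*b*c*b := by
        simpa only [mul_assoc, one_mul, mul_one] using congrArg (fun t => c * t * (c*b*c*b*c*a*b*c*b)) (hab.symm)
      _ = c*a*b*a*b*c*b*b*c*a*b*c*b := by
        simpa only [mul_assoc, one_mul, mul_one] using congrArg (fun t => c*a*b*a * t * (b*c*a*b*c*b)) (hbc.symm)
      _ = c*a*a*b*a*c*b*b*c*a*b*c*b := by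
        simpa only [mul_assoc, one_mul, mul_one] using congrArg (fun t => c*a * t * (c*b*b*c*a*b*c*b)) (hab.symm)
      _ = a*c*a*b*a*c*b*b*c*a*b*c*b := by
        simpa only [mul_assoc, one_mul, mul_one] using congrArg (fun t => 1 * t * (a*b*a*c*b*b*c*a*b*c*b)) (hac.symm)
      _ = a*a*c*b*a*c*b*b*c*a*b*c*b := by
        simpa only [mul_assoc, one_mul, mul_one] using congrArg (fun t => a * t * (b*a*c*b*b*c*a*b*c*b)) (hac.symm)
      _ = a*a*c*b*a*c*b*b*a*c*b*c*b := by
        simpa only [mul_assoc, one_mul, mul_one] using congrArg (fun t => a*a*c*b*a*c*b*b * t * (b*c*b)) (hac.symm)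
      _ = a*a*c*b*a*c*b*b*a*b*c*b*b := by
        simpa only [mul_assoc, one_mul, mul_one] using congrArg (fun t => a*a*c*b*a*c*b*b*a * t * (b)) (hbc.symm)
      _ = a*a*c*b*a*c*b*a*b*a*c*b*b := by
        simpa only [mul_assoc, one_mul, mul_one] using congrArg (fun t => a*a*c*b*a*c*b * t * (c*b*b)) (hab.symm)
      _ = a*a*c*b*a*c*a*b*a*a*c*b*b := by
        simpa only [mul_assoc, one_mul, mul_one] using congrArg (fun t => a*a*c*b*a*c * t * (a*c*b*b)) (hab.symm)
      _ = a*a*c*b*a*a*c*b*a*a*c*b*b := by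
        simpa only [mul_assoc, one_mul, mul_one] using congrArg (fun t => a*a*c*b*a * t * (b*a*a*c*b*b)) (hac.symm)
  simpa only [pow_succ, pow_zero, one_mul, mul_assoc] using key

theorem exists_letter (p q : Fin 2 × Bool) : ∃ l : Fin 2 × Bool,
    l ≠ p ∧ (l.1 = p.1 → l.2 = p.2) ∧ (q.1 = l.1 → q.2 = l.2) := by
  revert p q; decide

theorem free_center (w : FreeGroup (Fin 2)) (h : ∀ g, g * w = w * g) : w = 1 := by
  by_contra hw
  have hne : w.toWord ≠ [] := fun h0 => hw (FreeGroup.toWord_eq_nil_iff.1 h0)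
  have hred : FreeGroup.IsReduced w.toWord := FreeGroup.isReduced_toWord
  obtain ⟨l, h1, h2, h3⟩ := exists_letter (w.toWord.head hne) (w.toWord.getLast hne)
  have e : FreeGroup.mk (l :: w.toWord) = FreeGroup.mk (w.toWord ++ [l]) := by
    have := h (FreeGroup.mk [l])
    rw [← FreeGroup.mk_toWord (x := w), FreeGroup.mul_mk, FreeGroup.mul_mk] at this
    simpa using this
  have r1 : FreeGroup.IsReduced (l :: w.toWord) := by
    unfold FreeGroup.IsReduced at *
    rw [List.isChain_cons]
    refine ⟨?_, hred⟩
    intro y hy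
    rw [List.head?_eq_some_head hne] at hy
    simp at hy
    subst hy
    exact h2
  have r2 : FreeGroup.IsReduced (w.toWord ++ [l]) := by
    unfold FreeGroup.IsReduced at *
    rw [List.isChain_append]
    refine ⟨hred, by simp, ?_⟩
    intro x hx y hy
    rw [List.getLast?_eq_some_getLast hne] at hx
    simp at hx hy
    subst hx hy
    exact h3
  have e2 : l :: w.toWord = w.toWord ++ [l] := by
    have := congrArg FreeGroup.toWord e
    rwa [FreeGroup.toWord_mk, FreeGroup.toWord_mk, r1.reduce_eq, r2.reduce_eq] at this
  apply h1
  have := congrArg List.head? e2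
  rw [List.head?_append_of_ne_nil _ hne, List.head?_eq_some_head hne] at this
  simpa using this

/-- Answer to Hamidi-Tehrani's question: the subgroup of `B₄` generated by `σ1² σ3` and
`σ2` is not free of rank 2. -/
theorem stmt_19 :
    IsEmpty
      ((Subgroup.closure {(PresentedGroup.of 0 : B4) ^ 2 * PresentedGroup.of 2,
          PresentedGroup.of 1} : Subgroup B4) ≃* FreeGroup (Fin 2)) := by
  have rel : ∀ r ∈ B4rels, (PresentedGroup.mk B4rels r) = 1 := fun r hr =>
    PresentedGroup.one_of_mem hr
  have hab : (PresentedGroup.of 0 : B4) * PresentedGroup.of 1 * PresentedGroup.of 0 =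
      PresentedGroup.of 1 * PresentedGroup.of 0 * PresentedGroup.of 1 := by
    have := rel _ (Or.inl rfl)
    rw [map_mul, map_inv, mul_inv_eq_one] at this
    simp only [map_mul] at this
    exact this
  have hbc : (PresentedGroup.of 1 : B4) * PresentedGroup.of 2 * PresentedGroup.of 1 =
      PresentedGroup.of 2 * PresentedGroup.of 1 * PresentedGroup.of 2 := by
    have := rel _ (Or.inr (Or.inl rfl))
    rw [map_mul, map_inv, mul_inv_eq_one] at this
    simp only [map_mul] at this
    exact this
  have hac : (PresentedGroup.of 0 : B4) * PresentedGroup.of 2 =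
      PresentedGroup.of 2 * PresentedGroup.of 0 := by
    have := rel _ (Or.inr (Or.inr rfl))
    rw [map_mul, map_inv, mul_inv_eq_one] at this
    simp only [map_mul] at this
    exact this
  have hlift : ∀ r ∈ B4rels,
      FreeGroup.lift (fun _ : Fin 3 => Multiplicative.ofAdd (1 : ℤ)) r = 1 := by
    rintro r (rfl | rfl | rfl) <;> simp
  have hb := braid_comm _ _ _ hab hbc hac
  have hz1 : ((PresentedGroup.of 0 : B4) ^ 2 * PresentedGroup.of 2 * PresentedGroup.of 1) ^ 3
      ≠ 1 := by
    intro h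
    have := congrArg (PresentedGroup.toGroup hlift) h
    simp only [map_pow, map_mul, PresentedGroup.toGroup.of, map_one] at this
    revert this
    decide
  revert hb hz1
  generalize (PresentedGroup.of 0 : B4) ^ 2 * PresentedGroup.of 2 = x
  generalize (PresentedGroup.of 1 : B4) = y
  intro hb hz1
  constructor
  intro f
  have hx : x ∈ Subgroup.closure {x, y} := Subgroup.subset_closure (by simp)
  have hy : y ∈ Subgroup.closure {x, y} := Subgroup.subset_closure (by simp)
  have cy : Commute y ((x * y) ^ 3) := hb
  have cx : Commute x ((x * y) ^ 3) := by
    have h1 : Commute (x * y) ((x * y) ^ 3) := Commute.self_pow _ _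
    have := h1.mul_left cy.inv_left
    simpa using this
  have hle : Subgroup.closure {x, y} ≤ Subgroup.centralizer {(x * y) ^ 3} := by
    rw [Subgroup.closure_le]
    rintro g (rfl | rfl)
    · exact Subgroup.mem_centralizer_singleton_iff.2 cx
    · exact Subgroup.mem_centralizer_singleton_iff.2 cy
  let z : Subgroup.closure {x, y} := ⟨(x * y) ^ 3, pow_mem (mul_mem hx hy) 3⟩
  have hz : f z = 1 := by
    apply free_center
    intro g
    obtain ⟨g, rfl⟩ := f.surjective g
    rw [← map_mul, ← map_mul]
    congr 1
    exact Subtype.ext (Subgroup.mem_centralizer_singleton_iff.1 (hle g.2))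
  have : z = 1 := f.injective (by rw [hz, map_one])
  exact hz1 (congrArg Subtype.val this)
end
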